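/- arXiv:2511.08097 — 4 statements merged into one kernel-verified Lean document; each statement's English description precedes it below -/
import Mathlib

section
/- For every stationary randomized policy π respecting the budget constraint and every initial joint state s₀ = (s₁,…,s_N), the long-run average reward is bounded by the gain: limsup_{T→∞} (1/T)·E_π[ ∑_{t=0}^{T−1} (1/N)∑_{n=1}^N r_n(S_n(t),A_n(t)) | S(0)=s₀ ] ≤ g*. -/
open Finset Filter

section RMAB

variable {N : ℕ} {S : Fin N → Type} [∀ n, Fintype (S n)] [∀ n, DecidableEq (S n)]

/-- A state-action vector on a finite state space: nonnegative entries summing to one. -/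
def IsSA {σ : Type} [Fintype σ] (y : σ → Bool → ℝ) : Prop :=
  (∀ s a, 0 ≤ y s a) ∧ (∑ s, (y s false + y s true)) = 1

/-- A probability vector on a finite state space. -/
def IsProbVec {σ : Type} [Fintype σ] (x : σ → ℝ) : Prop :=
  (∀ s, 0 ≤ x s) ∧ (∑ s, x s) = 1

/-- A row-stochastic matrix. -/
def RowStochastic {σ : Type} [Fintype σ] (P : σ → σ → ℝ) : Prop :=
  (∀ s s', 0 ≤ P s s') ∧ ∀ s, (∑ s', P s s') = 1

/-- The next-state row vector `y₀·P⁰ + y₁·P¹`. -/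
noncomputable def nextVec {σ : Type} [Fintype σ] (P : Bool → σ → σ → ℝ) (y : σ → Bool → ℝ) (s' : σ) : ℝ :=
  ∑ s, (y s false * P false s s' + y s true * P true s s')

/-- Budget feasibility of a concatenation of state-action vectors: `∑ₙ ‖y⁽ⁿ⁾₁‖₁ ≤ Nα`. -/
def BudgetFeasible (α : ℝ) (y : ∀ n, S n → Bool → ℝ) : Prop :=
  (∑ n, ∑ s, y n s true) ≤ (N : ℝ) * α

/-- The normalized reward `(1/N)∑ₙ∑ₛₐ rₙ(s,a)·y⁽ⁿ⁾(s,a)`. -/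
noncomputable def lpReward (r : ∀ n, S n → Bool → ℝ) (y : ∀ n, S n → Bool → ℝ) : ℝ :=
  (1 / (N : ℝ)) * ∑ n, ∑ s, (r n s false * y n s false + r n s true * y n s true)

/-- Feasibility for the relaxed fixed-point LP. -/
def FPFeasible (P : ∀ n, Bool → S n → S n → ℝ) (α : ℝ) (y : ∀ n, S n → Bool → ℝ) : Prop :=
  (∀ n, IsSA (y n)) ∧ BudgetFeasible α y ∧
    ∀ n s', y n s' false + y n s' true = nextVec (P n) (y n) s'

/-- The gain `g*`: optimal value of the relaxed fixed-point LP. -/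
noncomputable def gain (P : ∀ n, Bool → S n → S n → ℝ) (r : ∀ n, S n → Bool → ℝ)
    (α : ℝ) : ℝ :=
  sSup {v | ∃ y : ∀ n, S n → Bool → ℝ, FPFeasible P α y ∧ v = lpReward r y}

/-- A dissipative multiplier. -/
def Dissipative (P : ∀ n, Bool → S n → S n → ℝ) (r : ∀ n, S n → Bool → ℝ) (α : ℝ)
    (μ : ∀ n, S n → ℝ) : Prop :=
  ∀ y : ∀ n, S n → Bool → ℝ, (∀ n, IsSA (y n)) → BudgetFeasible α y →
    lpReward r y - gain P r α ≤
      (1 / (N : ℝ)) * ∑ n, ∑ s, μ n s * ((y n s false + y n s true) - nextVec (P n) (y n) s)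

/-- The `k`-step kernel `P^{a₁}⋯P^{a_k}` for a word of actions. -/
noncomputable def wordKernel {σ : Type} [Fintype σ] [DecidableEq σ] (P : Bool → σ → σ → ℝ) :
    List Bool → σ → σ → ℝ
  | [], s, s' => if s = s' then 1 else 0
  | a :: w, s, s' => ∑ s'', P a s s'' * wordKernel P w s'' s'

/-- The ergodicity coefficient `ρ_k`. -/
noncomputable def ergCoef (P : ∀ n, Bool → S n → S n → ℝ) (k : ℕ) : ℝ :=
  sInf {v | ∃ (n : Fin N) (s s' : S n) (w : List Bool), w.length = k ∧
    v = ∑ s'', min (wordKernel (P n) w s s'')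
      (wordKernel (P n) (List.replicate k false) s' s'')}

/-- The sup-norm `max_{n,s} |μ⁽ⁿ⁾(s)|` of a terminal vector. -/
noncomputable def supNorm (μ : ∀ n, S n → ℝ) : ℝ :=
  sSup {v | ∃ (n : Fin N) (s : S n), v = |μ n s|}

/-- The finite-horizon LP value `V_τ^μ(x)`. -/
noncomputable def Vfin (P : ∀ n, Bool → S n → S n → ℝ) (r : ∀ n, S n → Bool → ℝ) (α : ℝ)
    (μ : ∀ n, S n → ℝ) (τ : ℕ) (x : ∀ n, S n → ℝ) : ℝ :=
  sSup {v | ∃ y : ℕ → ∀ n, S n → Bool → ℝ,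
    (∀ t, t ≤ τ → ∀ n, IsSA (y t n)) ∧
    (∀ n s, y 0 n s false + y 0 n s true = x n s) ∧
    (∀ t, t < τ → ∀ n s',
      y (t + 1) n s' false + y (t + 1) n s' true = nextVec (P n) (y t n) s') ∧
    (∀ t, t ≤ τ → BudgetFeasible α (y t)) ∧
    v = (∑ t ∈ Finset.range τ, lpReward r (y t)) +
      (1 / (N : ℝ)) * ∑ n, ∑ s, μ n s * (y τ n s false + y τ n s true)}

/-- A stationary randomized policy respecting the budget constraint. -/
def IsPolicy (α : ℝ) (π : (∀ n, S n) → (Fin N → Bool) → ℝ) : Prop :=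
  ∀ s : ∀ n, S n, (∀ a, 0 ≤ π s a) ∧ (∑ a : Fin N → Bool, π s a) = 1 ∧
    ∀ a : Fin N → Bool, π s a ≠ 0 → (∑ n, (if a n then (1 : ℝ) else 0)) ≤ α * N

/-- Distribution of the joint state at time `t` under policy `π` started from `s₀`. -/
noncomputable def stateDist (P : ∀ n, Bool → S n → S n → ℝ)
    (π : (∀ n, S n) → (Fin N → Bool) → ℝ) (s₀ : ∀ n, S n) : ℕ → (∀ n, S n) → ℝ
  | 0, s => if s = s₀ then 1 else 0
  | t + 1, s' => ∑ s : ∀ n, S n, ∑ a : Fin N → Bool,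
      stateDist P π s₀ t s * π s a * ∏ n, P n (a n) (s n) (s' n)

/-- The normalized stage reward `(1/N)∑ₙ rₙ(sₙ,aₙ)`. -/
noncomputable def stageReward (r : ∀ n, S n → Bool → ℝ) (s : ∀ n, S n) (a : Fin N → Bool) : ℝ :=
  (1 / (N : ℝ)) * ∑ n, r n (s n) (a n)

/-- Expected stage reward at time `t` under policy `π` started from `s₀`. -/
noncomputable def expStageReward (P : ∀ n, Bool → S n → S n → ℝ)
    (r : ∀ n, S n → Bool → ℝ) (π : (∀ n, S n) → (Fin N → Bool) → ℝ)
    (s₀ : ∀ n, S n) (t : ℕ) : ℝ :=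
  ∑ s : ∀ n, S n, stateDist P π s₀ t s * ∑ a : Fin N → Bool, π s a * stageReward r s a

/-- The Lagrangian `L_τ^μ(x,λ)` of the finite-horizon LP (budget constraints dualized). -/
noncomputable def Lag (P : ∀ n, Bool → S n → S n → ℝ) (r : ∀ n, S n → Bool → ℝ) (α : ℝ)
    (μ : ∀ n, S n → ℝ) (τ : ℕ) (x : ∀ n, S n → ℝ) (lam : ℕ → ℝ) : ℝ :=
  sSup {v | ∃ y : ℕ → ∀ n, S n → Bool → ℝ,
    (∀ t, t ≤ τ → ∀ n, IsSA (y t n)) ∧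
    (∀ n s, y 0 n s false + y 0 n s true = x n s) ∧
    (∀ t, t < τ → ∀ n s',
      y (t + 1) n s' false + y (t + 1) n s' true = nextVec (P n) (y t n) s') ∧
    v = (∑ t ∈ Finset.range τ,
        (lpReward r (y t) + lam t * (α - (1 / (N : ℝ)) * ∑ n, ∑ s, y t n s true))) +
      (1 / (N : ℝ)) * ∑ n, ∑ s, μ n s * (y τ n s false + y τ n s true)}

/-- The per-arm value `Vₙ^τ(x⁽ⁿ⁾,λ)`. -/
noncomputable def Varm (P : ∀ n, Bool → S n → S n → ℝ) (r : ∀ n, S n → Bool → ℝ)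
    (μ : ∀ n, S n → ℝ) (n : Fin N) (τ : ℕ) (xn : S n → ℝ) (lam : ℕ → ℝ) : ℝ :=
  sSup {v | ∃ z : ℕ → S n → Bool → ℝ,
    (∀ t, t ≤ τ → IsSA (z t)) ∧
    (∀ s, z 0 s false + z 0 s true = xn s) ∧
    (∀ t, t < τ → ∀ s', z (t + 1) s' false + z (t + 1) s' true = nextVec (P n) (z t) s') ∧
    v = (∑ t ∈ Finset.range τ,
        ((∑ s, (r n s false * z t s false + r n s true * z t s true)) -
          lam t * ∑ s, z t s true)) +
      ∑ s, μ n s * (z τ s false + z τ s true)}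

/-- One-hot encoding of a joint state as a tuple of probability vectors. -/
noncomputable def oneHot (s : ∀ n, S n) : ∀ n, S n → ℝ := fun n s' => if s' = s n then 1 else 0

end RMAB

section Helpers

variable {N : ℕ} {S : Fin N → Type} [∀ n, Fintype (S n)] [∀ n, DecidableEq (S n)]

/-- Sum of product kernel is one. -/
lemma prodKer_sum (F : ∀ n, S n → ℝ) :
    ∑ s : ∀ n, S n, ∏ n, F n (s n) = ∏ n, ∑ x, F n x := by
  rw [Finset.prod_univ_sum, Fintype.piFinset_univ]

lemma prodKer_marg (F : ∀ n, S n → ℝ) (hF : ∀ n, ∑ x, F n x = 1) (n : Fin N) (g : S n → ℝ) :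
    ∑ s : ∀ n, S n, g (s n) * ∏ m, F m (s m) = ∑ x, g x * F n x := by
  classical
  have h := prodKer_sum (Function.update F n (fun x => g x * F n x))
  have h2 : ∏ m, ∑ x, Function.update F n (fun x => g x * F n x) m x = ∑ x, g x * F n x := by
    rw [Finset.prod_eq_single n]
    · simp
    · intro m _ hm
      rw [Function.update_of_ne hm]
      exact hF m
    · simp
  rw [h2] at h
  rw [← h]
  refine Finset.sum_congr rfl fun s _ => ?_
  rw [← Finset.mul_prod_erase univ (fun m => F m (s m)) (mem_univ n),
    ← Finset.mul_prod_erase univ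
      (fun m => Function.update F n (fun x => g x * F n x) m (s m)) (mem_univ n)]
  simp only [Function.update_self]
  rw [mul_assoc]
  congr 2
  refine Finset.prod_congr rfl fun m hm => ?_
  rw [Function.update_of_ne (Finset.ne_of_mem_erase hm)]

lemma stateDist_nonneg (α : ℝ) (P : ∀ n, Bool → S n → S n → ℝ)
    (hP : ∀ n a, RowStochastic (P n a))
    (π : (∀ n, S n) → (Fin N → Bool) → ℝ) (hπ : IsPolicy α π) (s₀ : ∀ n, S n) (t : ℕ) :
    ∀ s, 0 ≤ stateDist P π s₀ t s := by
  induction t with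
  | zero => intro s; simp only [stateDist]; split_ifs <;> norm_num
  | succ t ih =>
    intro s'
    simp only [stateDist]
    refine Finset.sum_nonneg fun s _ => Finset.sum_nonneg fun a _ => ?_
    exact mul_nonneg (mul_nonneg (ih s) ((hπ s).1 a))
      (Finset.prod_nonneg fun n _ => (hP n (a n)).1 _ _)

lemma stateDist_marg (P : ∀ n, Bool → S n → S n → ℝ)
    (hP : ∀ n a, RowStochastic (P n a))
    (π : (∀ n, S n) → (Fin N → Bool) → ℝ) (s₀ : ∀ n, S n) (t : ℕ)
    (n : Fin N) (g : S n → ℝ) :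
    ∑ s, stateDist P π s₀ (t + 1) s * g (s n) =
      ∑ s, ∑ a, stateDist P π s₀ t s * π s a * ∑ x, g x * P n (a n) (s n) x := by
  simp only [stateDist, Finset.sum_mul]
  rw [Finset.sum_comm]
  refine Finset.sum_congr rfl fun s _ => ?_
  rw [Finset.sum_comm]
  refine Finset.sum_congr rfl fun a _ => ?_
  rw [← prodKer_marg (fun m => P m (a m) (s m)) (fun m => (hP m (a m)).2 (s m)) n g,
    Finset.mul_sum]
  refine Finset.sum_congr rfl fun s' _ => ?_
  ring

lemma stateDist_sum (hN : 1 ≤ N) (α : ℝ) (P : ∀ n, Bool → S n → S n → ℝ)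
    (hP : ∀ n a, RowStochastic (P n a))
    (π : (∀ n, S n) → (Fin N → Bool) → ℝ) (hπ : IsPolicy α π) (s₀ : ∀ n, S n) (t : ℕ) :
    ∑ s, stateDist P π s₀ t s = 1 := by
  induction t with
  | zero => simp [stateDist]
  | succ t ih =>
    have h := stateDist_marg P hP π s₀ t ⟨0, hN⟩ (fun _ => 1)
    simp only [mul_one, one_mul, (hP _ _).2] at h
    rw [h, ← ih]
    refine Finset.sum_congr rfl fun s _ => ?_
    rw [← Finset.mul_sum, (hπ s).2.1, mul_one]

/-- Occupation state-action vector at time `t`. -/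
noncomputable def occ (P : ∀ n, Bool → S n → S n → ℝ)
    (π : (∀ n, S n) → (Fin N → Bool) → ℝ) (s₀ : ∀ n, S n) (t : ℕ) (n : Fin N) (x : S n)
    (b : Bool) : ℝ :=
  ∑ s : ∀ n, S n, ∑ a : Fin N → Bool,
    stateDist P π s₀ t s * π s a * (if s n = x ∧ a n = b then 1 else 0)

lemma occ_sum (P : ∀ n, Bool → S n → S n → ℝ)
    (π : (∀ n, S n) → (Fin N → Bool) → ℝ) (s₀ : ∀ n, S n) (t : ℕ) (n : Fin N)
    (f : S n → Bool → ℝ) :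
    ∑ x, (f x false * occ P π s₀ t n x false + f x true * occ P π s₀ t n x true) =
      ∑ s, ∑ a, stateDist P π s₀ t s * π s a * f (s n) (a n) := by
  simp only [occ, Finset.mul_sum, ← Finset.sum_add_distrib]
  rw [Finset.sum_comm]
  refine Finset.sum_congr rfl fun s _ => ?_
  rw [Finset.sum_comm]
  refine Finset.sum_congr rfl fun a _ => ?_
  rw [Finset.sum_eq_single (s n)]
  · cases a n <;> simp <;> ring
  · intro x _ hx
    simp [hx.symm]
  · simp

lemma occ_nonneg (α : ℝ) (P : ∀ n, Bool → S n → S n → ℝ)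
    (hP : ∀ n a, RowStochastic (P n a))
    (π : (∀ n, S n) → (Fin N → Bool) → ℝ) (hπ : IsPolicy α π) (s₀ : ∀ n, S n) (t : ℕ)
    (n : Fin N) (x : S n) (b : Bool) : 0 ≤ occ P π s₀ t n x b := by
  refine Finset.sum_nonneg fun s _ => Finset.sum_nonneg fun a _ => ?_
  refine mul_nonneg (mul_nonneg (stateDist_nonneg α P hP π hπ s₀ t s) ((hπ s).1 a)) ?_
  split_ifs <;> norm_num

lemma occ_total (hN : 1 ≤ N) (α : ℝ) (P : ∀ n, Bool → S n → S n → ℝ)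
    (hP : ∀ n a, RowStochastic (P n a))
    (π : (∀ n, S n) → (Fin N → Bool) → ℝ) (hπ : IsPolicy α π) (s₀ : ∀ n, S n) (t : ℕ)
    (n : Fin N) : IsSA (occ P π s₀ t n) := by
  refine ⟨occ_nonneg α P hP π hπ s₀ t n, ?_⟩
  have h := occ_sum P π s₀ t n (fun _ _ => 1)
  simp only [one_mul, mul_one] at h
  rw [h, ← stateDist_sum hN α P hP π hπ s₀ t]
  refine Finset.sum_congr rfl fun s _ => ?_
  rw [← Finset.mul_sum, (hπ s).2.1, mul_one]

lemma IsSA.le_one {σ : Type} [Fintype σ] {y : σ → Bool → ℝ} (h : IsSA y) (x : σ) :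
    y x false + y x true ≤ 1 := by
  rw [← h.2]
  exact Finset.single_le_sum (f := fun s => y s false + y s true)
    (fun s _ => add_nonneg (h.1 s false) (h.1 s true)) (mem_univ x)

lemma occ_flow (α : ℝ) (P : ∀ n, Bool → S n → S n → ℝ)
    (hP : ∀ n a, RowStochastic (P n a))
    (π : (∀ n, S n) → (Fin N → Bool) → ℝ) (hπ : IsPolicy α π) (s₀ : ∀ n, S n) (t : ℕ)
    (n : Fin N) (x : S n) :
    occ P π s₀ (t + 1) n x false + occ P π s₀ (t + 1) n x true =
      nextVec (P n) (occ P π s₀ t n) x := by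
  have h1 := occ_sum P π s₀ (t + 1) n (fun y _ => if y = x then 1 else 0)
  have h2 := occ_sum P π s₀ t n (fun y b => P n b y x)
  have h3 := stateDist_marg P hP π s₀ t n (fun y => if y = x then 1 else 0)
  simp only [ite_mul, one_mul, zero_mul, Finset.sum_add_distrib, Finset.sum_ite_eq',
    mem_univ, if_true] at h1 h3
  simp only [nextVec, mul_comm (occ P π s₀ t n _ _)]
  rw [h1, h2, ← h3]
  refine Finset.sum_congr rfl fun s _ => ?_
  rw [← Finset.sum_mul, ← Finset.mul_sum, (hπ s).2.1, mul_one]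

lemma occ_budget (hN : 1 ≤ N) (α : ℝ) (P : ∀ n, Bool → S n → S n → ℝ)
    (hP : ∀ n a, RowStochastic (P n a))
    (π : (∀ n, S n) → (Fin N → Bool) → ℝ) (hπ : IsPolicy α π) (s₀ : ∀ n, S n) (t : ℕ) :
    BudgetFeasible α (occ P π s₀ t) := by
  unfold BudgetFeasible
  have h (n : Fin N) := occ_sum P π s₀ t n (fun _ b => if b then 1 else 0)
  simp only [Bool.false_eq_true, if_false, if_true, zero_mul, one_mul, zero_add] at h
  simp only [h]
  rw [Finset.sum_comm]
  have key : ∀ s, ∑ n : Fin N, ∑ a, stateDist P π s₀ t s * π s a *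
      (if a n = true then (1:ℝ) else 0) ≤ stateDist P π s₀ t s * (N * α) := by
    intro s
    rw [Finset.sum_comm]
    calc _ ≤ ∑ a, stateDist P π s₀ t s * π s a * (N * α) := by
          refine Finset.sum_le_sum fun a _ => ?_
          rw [← Finset.mul_sum]
          by_cases h0 : π s a = 0
          · simp [h0]
          · refine mul_le_mul_of_nonneg_left ?_
              (mul_nonneg (stateDist_nonneg α P hP π hπ s₀ t s) ((hπ s).1 a))
            rw [mul_comm]
            exact (hπ s).2.2 a h0
      _ = _ := by rw [← Finset.sum_mul, ← Finset.mul_sum, (hπ s).2.1, mul_one]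
  refine (Finset.sum_le_sum fun s _ => key s).trans ?_
  rw [← Finset.sum_mul, stateDist_sum hN α P hP π hπ s₀ t, one_mul]

lemma occ_reward (P : ∀ n, Bool → S n → S n → ℝ) (r : ∀ n, S n → Bool → ℝ)
    (π : (∀ n, S n) → (Fin N → Bool) → ℝ) (s₀ : ∀ n, S n) (t : ℕ) :
    expStageReward P r π s₀ t = lpReward r (occ P π s₀ t) := by
  unfold expStageReward lpReward stageReward
  simp only [occ_sum, Finset.mul_sum]
  rw [Finset.sum_comm' (t' := univ) (s' := fun _ => univ) (by simp)]
  conv_rhs => rw [Finset.sum_comm]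
  rw [Finset.sum_comm]
  refine Finset.sum_congr rfl fun s _ => ?_
  conv_rhs => rw [Finset.sum_comm]
  refine Finset.sum_congr rfl fun a _ => ?_
  refine Finset.sum_congr rfl fun n _ => ?_
  ring

/-- Time average of occupation vectors. -/
noncomputable def avgOcc (P : ∀ n, Bool → S n → S n → ℝ)
    (π : (∀ n, S n) → (Fin N → Bool) → ℝ) (s₀ : ∀ n, S n) (T : ℕ) (n : Fin N) (x : S n)
    (b : Bool) : ℝ :=
  (1 / (T : ℝ)) * ∑ t ∈ Finset.range T, occ P π s₀ t n x b

lemma avg_const (T : ℕ) (hT : 1 ≤ T) (c : ℝ) :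
    (1 / (T : ℝ)) * ∑ _t ∈ Finset.range T, c = c := by
  have : (T : ℝ) ≠ 0 := by positivity
  simp; field_simp

lemma avgOcc_lin (P : ∀ n, Bool → S n → S n → ℝ)
    (π : (∀ n, S n) → (Fin N → Bool) → ℝ) (s₀ : ∀ n, S n) (T : ℕ) (n : Fin N)
    (f : S n → Bool → ℝ) :
    ∑ x, (f x false * avgOcc P π s₀ T n x false + f x true * avgOcc P π s₀ T n x true) =
      (1 / (T : ℝ)) * ∑ t ∈ Finset.range T,
       ∑ x, (f x false * occ P π s₀ t n x false + f x true * occ P π s₀ t n x true) := by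
  rw [Finset.sum_comm, Finset.mul_sum]
  refine Finset.sum_congr rfl fun x _ => ?_
  simp only [avgOcc, Finset.sum_add_distrib, ← Finset.mul_sum]
  ring

lemma avgOcc_SA (hN : 1 ≤ N) (α : ℝ) (P : ∀ n, Bool → S n → S n → ℝ)
    (hP : ∀ n a, RowStochastic (P n a))
    (π : (∀ n, S n) → (Fin N → Bool) → ℝ) (hπ : IsPolicy α π) (s₀ : ∀ n, S n) (T : ℕ)
    (hT : 1 ≤ T) (n : Fin N) : IsSA (avgOcc P π s₀ T n) := by
  refine ⟨fun s a => mul_nonneg (by positivity)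
    (Finset.sum_nonneg fun t _ => occ_nonneg α P hP π hπ s₀ t n s a), ?_⟩
  have h := avgOcc_lin P π s₀ T n (fun _ _ => 1)
  simp only [one_mul] at h
  rw [h]
  simp only [(occ_total hN α P hP π hπ s₀ _ n).2]
  exact avg_const T hT 1

lemma avgOcc_budget (hN : 1 ≤ N) (α : ℝ) (P : ∀ n, Bool → S n → S n → ℝ)
    (hP : ∀ n a, RowStochastic (P n a))
    (π : (∀ n, S n) → (Fin N → Bool) → ℝ) (hπ : IsPolicy α π) (s₀ : ∀ n, S n) (T : ℕ)
    (hT : 1 ≤ T) : BudgetFeasible α (avgOcc P π s₀ T) := by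
  unfold BudgetFeasible
  have h (n : Fin N) := avgOcc_lin P π s₀ T n (fun _ b => if b then 1 else 0)
  simp only [Bool.false_eq_true, if_false, if_true, zero_mul, one_mul, zero_add] at h
  simp only [h]
  rw [← Finset.mul_sum, Finset.sum_comm, ← avg_const T hT ((N : ℝ) * α)]
  refine mul_le_mul_of_nonneg_left ?_ (by positivity)
  exact Finset.sum_le_sum fun t _ => occ_budget hN α P hP π hπ s₀ t

lemma avgOcc_reward (P : ∀ n, Bool → S n → S n → ℝ) (r : ∀ n, S n → Bool → ℝ)
    (π : (∀ n, S n) → (Fin N → Bool) → ℝ) (s₀ : ∀ n, S n) (T : ℕ) :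
    (1 / (T : ℝ)) * ∑ t ∈ Finset.range T, expStageReward P r π s₀ t =
      lpReward r (avgOcc P π s₀ T) := by
  simp only [occ_reward, lpReward, avgOcc_lin]
  rw [← Finset.mul_sum, ← Finset.mul_sum, Finset.sum_comm]
  ring

lemma avgOcc_flow (α : ℝ) (P : ∀ n, Bool → S n → S n → ℝ)
    (hP : ∀ n a, RowStochastic (P n a))
    (π : (∀ n, S n) → (Fin N → Bool) → ℝ) (hπ : IsPolicy α π) (s₀ : ∀ n, S n) (T : ℕ)
    (n : Fin N) (x : S n) :
    avgOcc P π s₀ T n x false + avgOcc P π s₀ T n x true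
      - nextVec (P n) (avgOcc P π s₀ T n) x =
      (1 / (T : ℝ)) * ((occ P π s₀ 0 n x false + occ P π s₀ 0 n x true)
        - (occ P π s₀ T n x false + occ P π s₀ T n x true)) := by
  have h := avgOcc_lin P π s₀ T n (fun y b => P n b y x)
  have h2 : ∀ t, ∑ y, (P n false y x * occ P π s₀ t n y false
      + P n true y x * occ P π s₀ t n y true)
      = occ P π s₀ (t + 1) n x false + occ P π s₀ (t + 1) n x true := by
    intro t
    rw [occ_flow α P hP π hπ s₀ t n x]
    simp only [nextVec, mul_comm (occ P π s₀ t n _ _)]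
  have h3 : nextVec (P n) (avgOcc P π s₀ T n) x = (1 / (T : ℝ)) * ∑ t ∈ Finset.range T,
      (occ P π s₀ (t + 1) n x false + occ P π s₀ (t + 1) n x true) := by
    simp only [nextVec, mul_comm (avgOcc P π s₀ T n _ _)]
    rw [h]
    simp only [h2]
  rw [h3, ← Finset.sum_range_sub' (fun t => occ P π s₀ t n x false + occ P π s₀ t n x true)]
  simp only [avgOcc, Finset.sum_sub_distrib, Finset.sum_add_distrib]
  ring

lemma lpReward_le_one (hN : 1 ≤ N) (r : ∀ n, S n → Bool → ℝ)
    (hr : ∀ n s a, 0 ≤ r n s a ∧ r n s a ≤ 1) (y : ∀ n, S n → Bool → ℝ)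
    (hy : ∀ n, IsSA (y n)) : lpReward r y ≤ 1 := by
  unfold lpReward
  have hN' : (0 : ℝ) < N := by exact_mod_cast hN
  have : ∑ n, ∑ s, (r n s false * y n s false + r n s true * y n s true)
      ≤ ∑ _n : Fin N, (1 : ℝ) := by
    refine Finset.sum_le_sum fun n _ => ?_
    rw [← (hy n).2]
    refine Finset.sum_le_sum fun s _ => ?_
    exact add_le_add (mul_le_of_le_one_left ((hy n).1 s false) (hr n s false).2)
      (mul_le_of_le_one_left ((hy n).1 s true) (hr n s true).2)
  simp only [Finset.sum_const, card_univ, Fintype.card_fin, nsmul_eq_mul, mul_one] at this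
  rw [one_div, inv_mul_le_iff₀ hN']
  linarith

lemma lpReward_nonneg (r : ∀ n, S n → Bool → ℝ)
    (hr : ∀ n s a, 0 ≤ r n s a ∧ r n s a ≤ 1) (y : ∀ n, S n → Bool → ℝ)
    (hy : ∀ n s a, 0 ≤ y n s a) : 0 ≤ lpReward r y := by
  unfold lpReward
  refine mul_nonneg (by positivity) (Finset.sum_nonneg fun n _ => Finset.sum_nonneg fun s _ => ?_)
  exact add_nonneg (mul_nonneg (hr _ _ _).1 (hy _ _ _)) (mul_nonneg (hr _ _ _).1 (hy _ _ _))

end Helpers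

/-- for every stationary randomized policy respecting the budget and every
initial joint state, the long-run average reward is bounded by the gain `g*`. -/
theorem lp_relaxation_upper_bound
    {N : ℕ} {S : Fin N → Type} [∀ n, Fintype (S n)] [∀ n, DecidableEq (S n)]
    [∀ n, Nonempty (S n)]
    (hN : 1 ≤ N) (α : ℝ) (hα0 : 0 < α) (hα1 : α ≤ 1)
    (P : ∀ n, Bool → S n → S n → ℝ) (hP : ∀ n a, RowStochastic (P n a))
    (r : ∀ n, S n → Bool → ℝ) (hr : ∀ n s a, 0 ≤ r n s a ∧ r n s a ≤ 1)
    (π : (∀ n, S n) → (Fin N → Bool) → ℝ) (hπ : IsPolicy α π)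
    (s₀ : ∀ n, S n) :
    Filter.limsup
      (fun T : ℕ => (1 / (T : ℝ)) * ∑ t ∈ Finset.range T, expStageReward P r π s₀ t)
      Filter.atTop ≤ gain P r α := by
  simp only [avgOcc_reward]
  have hnn : ∀ T n x b, 0 ≤ avgOcc P π s₀ T n x b := fun T n s a =>
    mul_nonneg (by positivity)
      (Finset.sum_nonneg fun t _ => occ_nonneg α P hP π hπ s₀ t n s a)
  by_contra hcon
  rw [not_le] at hcon
  obtain ⟨b, hb1, hb2⟩ := exists_between hcon
  have hfreq : ∃ᶠ T in atTop, b < lpReward r (avgOcc P π s₀ T) := by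
    refine Filter.frequently_lt_of_lt_limsup ?_ hb2
    exact Filter.IsCoboundedUnder.of_frequently_ge (a := 0)
      (Filter.Frequently.of_forall fun T => lpReward_nonneg r hr _ (hnn T))
  have hne : NeBot (atTop ⊓ 𝓟 {T : ℕ | b < lpReward r (avgOcc P π s₀ T)}) :=
    Filter.frequently_mem_iff_neBot.1 hfreq
  let U := Ultrafilter.of (atTop ⊓ 𝓟 {T : ℕ | b < lpReward r (avgOcc P π s₀ T)})
  have hU : (U : Filter ℕ) ≤ atTop ⊓ 𝓟 {T : ℕ | b < lpReward r (avgOcc P π s₀ T)} :=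
    Ultrafilter.of_le _
  have hUtop : (U : Filter ℕ) ≤ atTop := hU.trans inf_le_left
  have hUb : ∀ᶠ T in (U : Filter ℕ), b < lpReward r (avgOcc P π s₀ T) :=
    hU.trans inf_le_right (Filter.mem_principal_self _)
  have hU1 : ∀ᶠ T in (U : Filter ℕ), 1 ≤ T := hUtop (eventually_ge_atTop 1)
  have hK : IsCompact (Set.Icc (0 : ∀ n, S n → Bool → ℝ) 1) := isCompact_Icc
  obtain ⟨y, -, hy⟩ := hK.ultrafilter_le_nhds (U.map (avgOcc P π s₀)) (by
    rw [Filter.le_principal_iff]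
    change ∀ᶠ T in (U : Filter ℕ), avgOcc P π s₀ T ∈ Set.Icc 0 1
    filter_upwards [hU1] with T hT
    refine ⟨fun n x b => hnn T n x b, fun n x b => ?_⟩
    have h1 := (avgOcc_SA hN α P hP π hπ s₀ T hT n).le_one x
    have h2 := hnn T n x false
    have h3 := hnn T n x true
    cases b
    · change avgOcc P π s₀ T n x false ≤ 1
      linarith
    · change avgOcc P π s₀ T n x true ≤ 1
      linarith)
  have hlim : Tendsto (avgOcc P π s₀) U (nhds y) := hy
  have hl : ∀ n x b, Tendsto (fun T => avgOcc P π s₀ T n x b) U (nhds (y n x b)) := by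
    intro n x b
    exact ((tendsto_pi_nhds.1 ((tendsto_pi_nhds.1 ((tendsto_pi_nhds.1 hlim) n)) x)) b)
  have hSA : ∀ n, IsSA (y n) := by
    intro n
    refine ⟨fun s a => ge_of_tendsto' (hl n s a) fun T => hnn T n s a, ?_⟩
    have h1 : Tendsto (fun T => ∑ s, (avgOcc P π s₀ T n s false + avgOcc P π s₀ T n s true)) U
        (nhds (∑ s, (y n s false + y n s true))) :=
      tendsto_finsetSum _ fun s _ => (hl n s false).add (hl n s true)
    refine tendsto_nhds_unique h1 (tendsto_const_nhds.congr' ?_)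
    filter_upwards [hU1] with T hT
    exact (avgOcc_SA hN α P hP π hπ s₀ T hT n).2.symm
  have hB : BudgetFeasible α y := by
    have h1 : Tendsto (fun T => ∑ n, ∑ s, avgOcc P π s₀ T n s true) U
        (nhds (∑ n, ∑ s, y n s true)) :=
      tendsto_finsetSum _ fun n _ => tendsto_finsetSum _ fun s _ => hl n s true
    refine le_of_tendsto h1 ?_
    filter_upwards [hU1] with T hT
    exact avgOcc_budget hN α P hP π hπ s₀ T hT
  have hF : ∀ n s', y n s' false + y n s' true = nextVec (P n) (y n) s' := by
    intro n x
    have h1 : Tendsto (fun T => avgOcc P π s₀ T n x false + avgOcc P π s₀ T n x true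
        - nextVec (P n) (avgOcc P π s₀ T n) x) U
        (nhds (y n x false + y n x true - nextVec (P n) (y n) x)) := by
      refine ((hl n x false).add (hl n x true)).sub ?_
      exact tendsto_finsetSum _ fun s _ =>
        ((hl n s false).mul_const _).add ((hl n s true).mul_const _)
    have h2 : Tendsto (fun T : ℕ => 1 / (T : ℝ)) U (nhds 0) :=
      tendsto_one_div_atTop_nhds_zero_nat.mono_left hUtop
    have h3 : Tendsto (fun T => avgOcc P π s₀ T n x false + avgOcc P π s₀ T n x true
        - nextVec (P n) (avgOcc P π s₀ T n) x) U (nhds 0) := by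
      refine squeeze_zero_norm (fun T => ?_) h2
      rw [avgOcc_flow α P hP π hπ s₀ T n x, norm_mul, Real.norm_of_nonneg (by positivity)]
      refine mul_le_of_le_one_right (by positivity) ?_
      have a1 := occ_total hN α P hP π hπ s₀ 0 n
      have a2 := occ_total hN α P hP π hπ s₀ T n
      have b1 := a1.le_one x
      have b2 := a2.le_one x
      have c1 := a1.1 x
      have c2 := a2.1 x
      rw [Real.norm_eq_abs, abs_le]
      constructor <;> linarith [c1 false, c1 true, c2 false, c2 true]
    exact sub_eq_zero.1 (tendsto_nhds_unique h1 h3)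
  have hR : Tendsto (fun T => lpReward r (avgOcc P π s₀ T)) U (nhds (lpReward r y)) := by
    refine Tendsto.const_mul _ ?_
    exact tendsto_finsetSum _ fun n _ => tendsto_finsetSum _ fun s _ =>
      ((hl n s false).const_mul _).add ((hl n s true).const_mul _)
  have hge : b ≤ lpReward r y := ge_of_tendsto hR (hUb.mono fun T h => h.le)
  have hle : lpReward r y ≤ gain P r α := by
    refine le_csSup ⟨1, ?_⟩ ⟨y, ⟨hSA, hB, hF⟩, rfl⟩
    rintro v ⟨z, hz, rfl⟩
    exact lpReward_le_one hN r hr z hz.1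
  linarith
end

section
/- For every p = (p₁,…,p_N) ∈ [0,1]^N with ∑_{n=1}^N p_n ≤ αN, there exists a probability distribution over binary vectors A = (A₁,…,A_N) ∈ {0,1}^N, supported on vectors satisfying ∑_{n=1}^N A_n ≤ αN (equivalently ∑_n A_n ≤ ⌊αN⌋), such that the marginal distortion satisfies ∑_{n=1}^N |E[A_n] − p_n| ≤ αN − ⌊αN⌋ ≤ 1; in particular (1/N)∑_{n=1}^N |E[A_n] − p_n| ≤ (αN − ⌊αN⌋)/N ≤ 1/N. -/
open Finset Filter

def RRGood {N : ℕ} (K : ℝ) (p : Fin N → ℝ) : Prop :=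
  ∃ q : (Fin N → Bool) → ℝ, (∀ A, 0 ≤ q A) ∧ (∑ A : Fin N → Bool, q A) = 1 ∧
    (∀ A : Fin N → Bool, q A ≠ 0 → (∑ n, (if A n then (1 : ℝ) else 0)) ≤ K) ∧
    ∀ n, (∑ A : Fin N → Bool, q A * (if A n then (1 : ℝ) else 0)) = p n

theorem RRGood.comb {N : ℕ} {K : ℝ} {x y p : Fin N → ℝ} (hx : RRGood K x) (hy : RRGood K y)
    (a b : ℝ) (ha : 0 ≤ a) (hb : 0 ≤ b) (hab : a + b = 1) (h : ∀ n, p n = a * x n + b * y n) :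
    RRGood K p := by
  obtain ⟨q, q0, q1, q2, q3⟩ := hx
  obtain ⟨r, r0, r1, r2, r3⟩ := hy
  refine ⟨fun A => a * q A + b * r A, ?_, ?_, ?_, ?_⟩
  · intro A
    have := q0 A
    have := r0 A
    positivity
  · rw [Finset.sum_add_distrib, ← Finset.mul_sum, ← Finset.mul_sum, q1, r1]
    linarith
  · intro A hA
    by_cases h1 : q A = 0
    · by_cases h2 : r A = 0
      · simp [h1, h2] at hA
      · exact r2 A h2
    · exact q2 A h1
  · intro n
    rw [h n, ← q3, ← r3, Finset.mul_sum, Finset.mul_sum, ← Finset.sum_add_distrib]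
    refine Finset.sum_congr rfl fun A _ => ?_
    ring

theorem RRGood.int {N : ℕ} {K : ℝ} (p : Fin N → ℝ) (hp : ∀ n, p n = 0 ∨ p n = 1)
    (hs : ∑ n, p n ≤ K) : RRGood K p := by
  classical
  have key : ∀ n, (if (decide (p n = 1)) then (1 : ℝ) else 0) = p n := by
    intro n
    rcases hp n with h | h <;> simp [h]
  refine ⟨fun A => if A = (fun n => decide (p n = 1)) then 1 else 0, ?_, ?_, ?_, ?_⟩
  · intro A
    dsimp only
    split_ifs <;> norm_num
  · simp
  · intro A hA
    have : A = (fun n => decide (p n = 1)) := by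
      by_contra h
      simp [h] at hA
    subst this
    simp only [key]
    exact hs
  · intro n
    simp only [ite_mul, one_mul, zero_mul, Finset.sum_ite_eq', Finset.mem_univ, if_true]
    exact key n

noncomputable def rrF {N : ℕ} (p : Fin N → ℝ) : Finset (Fin N) :=
  Finset.univ.filter (fun n => p n ≠ 0 ∧ p n ≠ 1)

def rrMove {N : ℕ} (p : Fin N → ℝ) (i j : Fin N) (s : ℝ) : Fin N → ℝ :=
  fun n => p n + (if n = i then s else 0) - (if n = j then s else 0)

theorem rrMove_spec {N : ℕ} (p : Fin N → ℝ) (hp : ∀ n, 0 ≤ p n ∧ p n ≤ 1) (i j : Fin N)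
    (hij : i ≠ j) (hi : i ∈ rrF p) (hj : j ∈ rrF p) :
    ∃ s, 0 < s ∧ (∀ n, 0 ≤ rrMove p i j s n ∧ rrMove p i j s n ≤ 1) ∧
      ∑ n, rrMove p i j s n = ∑ n, p n ∧ (rrF (rrMove p i j s)).card < (rrF p).card := by
  simp only [rrF, Finset.mem_filter, Finset.mem_univ, true_and] at hi hj
  have hi1 : p i < 1 := lt_of_le_of_ne (hp i).2 hi.2
  have hj1 : 0 < p j := lt_of_le_of_ne (hp j).1 (Ne.symm hj.1)
  have hpi := hp i
  have hpj := hp j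
  have a1 := min_le_left (1 - p i) (p j)
  have a2 := min_le_right (1 - p i) (p j)
  have a0 : 0 < min (1 - p i) (p j) := lt_min (by linarith) hj1
  have a3 := min_choice (1 - p i) (p j)
  generalize min (1 - p i) (p j) = s at a0 a1 a2 a3
  have mi : rrMove p i j s i = p i + s := by simp [rrMove, hij]
  have mj : rrMove p i j s j = p j - s := by simp [rrMove, hij.symm]
  have mn : ∀ n, n ≠ i → n ≠ j → rrMove p i j s n = p n := by
    intro n h1 h2
    simp [rrMove, h1, h2]
  refine ⟨s, a0, ?_, ?_, ?_⟩
  · intro n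
    by_cases h1 : n = i
    · subst h1
      rw [mi]
      constructor <;> linarith
    · by_cases h2 : n = j
      · subst h2
        rw [mj]
        constructor <;> linarith
      · rw [mn n h1 h2]
        exact hp n
  · simp [rrMove, Finset.sum_sub_distrib, Finset.sum_add_distrib]
  · apply Finset.card_lt_card
    rw [Finset.ssubset_iff_of_subset]
    · rcases a3 with h | h
      · refine ⟨i, by simp [rrF, hi], ?_⟩
        have e : rrMove p i j s i = 1 := by linarith
        simp [rrF, e]
      · refine ⟨j, by simp [rrF, hj], ?_⟩
        have e : rrMove p i j s j = 0 := by linarith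
        simp [rrF, e]
    · intro n hn
      simp only [rrF, Finset.mem_filter, Finset.mem_univ, true_and] at hn ⊢
      by_cases h1 : n = i
      · subst h1
        exact hi
      · by_cases h2 : n = j
        · subst h2
          exact hj
        · rwa [mn n h1 h2] at hn

theorem rrGood_all {N : ℕ} (K : ℤ) : ∀ (m : ℕ) (p : Fin N → ℝ), (rrF p).card = m →
    (∀ n, 0 ≤ p n ∧ p n ≤ 1) → ∑ n, p n ≤ (K : ℝ) → RRGood (K : ℝ) p := by
  intro m
  induction m using Nat.strong_induction_on with
  | _ m ih =>
    intro p hm hp hs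
    by_cases h2 : 1 < (rrF p).card
    · obtain ⟨i, hi, j, hj, hij⟩ := Finset.one_lt_card.1 h2
      obtain ⟨s, s0, s1, s2, s3⟩ := rrMove_spec p hp i j hij hi hj
      obtain ⟨t, t0, t1, t2, t3⟩ := rrMove_spec p hp j i hij.symm hj hi
      have gx := ih _ (hm ▸ s3) _ rfl s1 (s2 ▸ hs)
      have gy := ih _ (hm ▸ t3) _ rfl t1 (t2 ▸ hs)
      refine gx.comb gy (t / (s + t)) (s / (s + t)) (by positivity) (by positivity)
        (by field_simp; ring) ?_
      intro n
      simp only [rrMove]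
      field_simp
      split_ifs <;> ring
    · by_cases h0 : (rrF p).card = 0
      · apply RRGood.int p _ hs
        intro n
        rw [Finset.card_eq_zero] at h0
        by_contra hn
        push Not at hn
        have : n ∈ rrF p := by simp [rrF, hn]
        simp [h0] at this
      · obtain ⟨i, hi⟩ := Finset.card_eq_one.1 (show (rrF p).card = 1 by omega)
        have hn : ∀ n, n ≠ i → p n = 0 ∨ p n = 1 := by
          intro n hne
          by_contra hn
          push Not at hn
          have : n ∈ rrF p := by simp [rrF, hn]
          rw [hi, Finset.mem_singleton] at this
          exact hne this
        have hii : i ∈ rrF p := by simp [hi]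
        simp only [rrF, Finset.mem_filter, Finset.mem_univ, true_and] at hii
        have hi0 : 0 < p i := lt_of_le_of_ne (hp i).1 (Ne.symm hii.1)
        have hsum : ∀ v : ℝ, ∑ n, Function.update p i v n
            = v + ∑ n ∈ Finset.univ.erase i, p n := by
          intro v
          rw [← Finset.add_sum_erase _ _ (Finset.mem_univ i), Function.update_self]
          congr 1
          refine Finset.sum_congr rfl fun n hn => ?_
          rw [Function.update_of_ne (Finset.ne_of_mem_erase hn)]
        have hz : ∃ z : ℤ, ∑ n ∈ Finset.univ.erase i, p n = (z : ℝ) := by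
          refine ⟨∑ n ∈ Finset.univ.erase i, (if p n = 1 then 1 else 0), ?_⟩
          push_cast
          refine Finset.sum_congr rfl fun n hn' => ?_
          rcases hn n (Finset.ne_of_mem_erase hn') with h | h <;> simp [h]
        obtain ⟨z, hz⟩ := hz
        have hp' := hsum (p i)
        rw [Function.update_eq_self, hz] at hp'
        have hzK : z < K := by
          have : (z : ℝ) < K := by linarith
          exact_mod_cast this
        have hzK' : (1 : ℝ) + z ≤ K := by
          have : 1 + z ≤ K := by omega
          exact_mod_cast this
        have hint : ∀ v : ℝ, v = 0 ∨ v = 1 → ∀ n, Function.update p i v n = 0 ∨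
            Function.update p i v n = 1 := by
          intro v hv n
          by_cases h : n = i
          · subst h
            simpa using hv
          · rw [Function.update_of_ne h]
            exact hn n h
        have g1 : RRGood (K : ℝ) (Function.update p i 1) :=
          RRGood.int _ (hint 1 (Or.inr rfl)) (by rw [hsum, hz]; exact hzK')
        have g0 : RRGood (K : ℝ) (Function.update p i 0) :=
          RRGood.int _ (hint 0 (Or.inl rfl)) (by rw [hsum, hz]; linarith)
        refine g1.comb g0 (p i) (1 - p i) (hp i).1 (by linarith [(hp i).2]) (by ring) ?_
        intro n
        by_cases h : n = i
        · subst h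
          simp
        · simp only [Function.update_of_ne h]
          ring

/-- guarantee of the randomized rounding procedure. -/
theorem randomized_rounding
    (N : ℕ) (hN : 1 ≤ N) (α : ℝ) (hα0 : 0 < α) (hα1 : α ≤ 1)
    (p : Fin N → ℝ) (hp : ∀ n, 0 ≤ p n ∧ p n ≤ 1)
    (hpsum : (∑ n, p n) ≤ α * N) :
    ∃ q : (Fin N → Bool) → ℝ,
      (∀ A, 0 ≤ q A) ∧ (∑ A : Fin N → Bool, q A) = 1 ∧
      (∀ A : Fin N → Bool, q A ≠ 0 →
        (∑ n, (if A n then (1 : ℝ) else 0)) ≤ α * N) ∧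
      (∀ A : Fin N → Bool, q A ≠ 0 →
        (∑ n, (if A n then (1 : ℝ) else 0)) ≤ (⌊α * (N : ℝ)⌋ : ℝ)) ∧
      (∑ n, |(∑ A : Fin N → Bool, q A * (if A n then (1 : ℝ) else 0)) - p n|)
        ≤ α * N - (⌊α * (N : ℝ)⌋ : ℝ) ∧
      α * N - (⌊α * (N : ℝ)⌋ : ℝ) ≤ 1 ∧
      (1 / (N : ℝ)) *
          (∑ n, |(∑ A : Fin N → Bool, q A * (if A n then (1 : ℝ) else 0)) - p n|)
        ≤ (α * N - (⌊α * (N : ℝ)⌋ : ℝ)) / N ∧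
      (α * N - (⌊α * (N : ℝ)⌋ : ℝ)) / N ≤ 1 / (N : ℝ) := by
  have hNpos : (0 : ℝ) < N := by exact_mod_cast hN
  have hfl := Int.floor_le (α * (N : ℝ))
  have hlt := Int.lt_floor_add_one (α * (N : ℝ))
  have hK0 : (0 : ℝ) ≤ (⌊α * (N : ℝ)⌋ : ℝ) := by
    exact_mod_cast Int.floor_nonneg.2 (by positivity)
  have hex : ∃ p' : Fin N → ℝ, (∀ n, 0 ≤ p' n ∧ p' n ≤ 1) ∧
      ∑ n, p' n ≤ (⌊α * (N : ℝ)⌋ : ℝ) ∧ ∑ n, |p' n - p n| ≤ α * N - (⌊α * (N : ℝ)⌋ : ℝ) := by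
    by_cases h : ∑ n, p n ≤ (⌊α * (N : ℝ)⌋ : ℝ)
    · exact ⟨p, hp, h, by simpa using hfl⟩
    · push Not at h
      have hS : 0 < ∑ n, p n := lt_of_le_of_lt hK0 h
      generalize (⌊α * (N : ℝ)⌋ : ℝ) = K at *
      have hc0 : 0 ≤ K / ∑ n, p n := by positivity
      have hc1 : K / ∑ n, p n ≤ 1 := (div_le_one hS).2 h.le
      have hcm : K / (∑ n, p n) * (∑ n, p n) = K := div_mul_cancel₀ _ hS.ne'
      generalize K / ∑ n, p n = c at *
      refine ⟨fun n => c * p n, fun n => ⟨mul_nonneg hc0 (hp n).1,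
        mul_le_one₀ hc1 (hp n).1 (hp n).2⟩, ?_, ?_⟩
      · rw [← Finset.mul_sum, hcm]
      · have : ∀ n, |c * p n - p n| = p n - c * p n := by
          intro n
          rw [abs_of_nonpos]
          · ring
          · nlinarith [(hp n).1]
        simp only [this]
        rw [Finset.sum_sub_distrib, ← Finset.mul_sum, hcm]
        linarith
  obtain ⟨p', h1, h2, h3⟩ := hex
  obtain ⟨q, q0, q1, q2, q3⟩ := rrGood_all _ _ p' rfl h1 h2
  refine ⟨q, q0, q1, fun A hA => (q2 A hA).trans hfl, q2, ?_, by linarith, ?_, ?_⟩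
  · simpa only [q3] using h3
  · simp only [q3]
    rw [one_div, inv_mul_eq_div]
    gcongr
  · gcongr
    linarith
end

section
/- There exists a terminal vector μ = (μ^{(1)},…,μ^{(N)}) with μ^{(n)} : S_n → ℝ such that the rotated cost is nonnegative on the whole budget-feasible set: for every budget-feasible concatenation y of state-action vectors, g* − (1/N)∑_n ∑_{s,a} r_n(s,a)·y^{(n)}(s,a) + (1/N)∑_n ∑_s μ^{(n)}(s)·[(y^{(n)}_0+y^{(n)}_1)(s) − (y^{(n)}_0·P_n^0 + y^{(n)}_1·P_n^1)(s)] ≥ 0, with equality when y is an optimal solution of the relaxed fixed-point LP (such an optimal solution exists). In other words, the fixed-point problem is dissipative with respect to its optimal fixed point, with storage function x ↦ (1/N)∑_n μ^{(n)}·x^{(n)}. -/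
open Finset Filter

theorem farkas_aux {V ι : Type*} [AddCommGroup V] [Module ℝ V] [DecidableEq ι] (I : Finset ι) :
    ∀ (a : ι → V →ₗ[ℝ] ℝ) (b : V →ₗ[ℝ] ℝ),
    (∀ x, (∀ i ∈ I, 0 ≤ a i x) → 0 ≤ b x) →
    ∃ l : ι → ℝ, (∀ i, 0 ≤ l i) ∧ ∀ x, b x = ∑ i ∈ I, l i * a i x := by
  induction I using Finset.induction_on with
  | empty =>
    intro a b h
    refine ⟨fun _ => 0, fun _ => le_rfl, fun x => ?_⟩
    have h1 := h x (by simp)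
    have h2 := h (-x) (by simp)
    simp at h2 ⊢
    linarith
  | insert k I hk ih =>
    intro a b h
    by_cases hc : ∀ x, (∀ i ∈ I, 0 ≤ a i x) → 0 ≤ b x
    · obtain ⟨l, hl, hb⟩ := ih a b hc
      refine ⟨fun i => if i = k then 0 else l i, fun i => ?_, fun x => ?_⟩
      · dsimp only
        split_ifs
        · exact le_rfl
        · exact hl i
      · rw [hb x, Finset.sum_insert hk]
        simp only [if_true, zero_mul, zero_add]
        refine Finset.sum_congr rfl fun i hi => ?_
        rw [if_neg (ne_of_mem_of_not_mem hi hk)]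
    · push Not at hc
      obtain ⟨z, hz, hbz⟩ := hc
      have hkz : a k z < 0 := by
        by_contra hcon
        push Not at hcon
        have := h z (fun i hi => by
          rcases Finset.mem_insert.1 hi with rfl | hi
          · exact hcon
          · exact hz i hi)
        linarith
      obtain ⟨l, hl, hb⟩ := ih (fun i => a i - (a i z / a k z) • a k)
        (b - (b z / a k z) • a k) (fun x hx => by
          have := h (x - (a k x / a k z) • z) (fun i hi => by
            rcases Finset.mem_insert.1 hi with rfl | hi
            · simp [div_mul_cancel₀ _ hkz.ne]
            · have := hx i hi
              simp only [LinearMap.sub_apply, LinearMap.smul_apply, smul_eq_mul] at this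
              simp only [map_sub, map_smul, smul_eq_mul]
              convert this using 2
              ring)
          simp only [map_sub, map_smul, smul_eq_mul] at this
          simp only [LinearMap.sub_apply, LinearMap.smul_apply, smul_eq_mul]
          convert this using 2
          ring)
      have hs : 0 ≤ ∑ i ∈ I, l i * a i z :=
        Finset.sum_nonneg fun i hi => mul_nonneg (hl i) (hz i hi)
      refine ⟨fun i => if i = k then (b z - ∑ i ∈ I, l i * a i z) / a k z else l i,
        fun i => ?_, fun x => ?_⟩
      · dsimp only
        split_ifs
        · exact div_nonneg_of_nonpos (by linarith) hkz.le
        · exact hl i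
      · have e := hb x
        simp only [LinearMap.sub_apply, LinearMap.smul_apply, smul_eq_mul] at e
        have e2 : ∑ i ∈ I, l i * (a i x - a i z / a k z * a k x)
            = ∑ i ∈ I, l i * a i x - (∑ i ∈ I, l i * a i z) / a k z * a k x := by
          rw [Finset.sum_div, Finset.sum_mul, ← Finset.sum_sub_distrib]
          refine Finset.sum_congr rfl fun i _ => ?_
          ring
        rw [e2] at e
        rw [Finset.sum_insert hk]
        have e3 : ∑ i ∈ I, (if i = k then (b z - ∑ i ∈ I, l i * a i z) / a k z else l i) * a i x
            = ∑ i ∈ I, l i * a i x := by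
          refine Finset.sum_congr rfl fun i hi => ?_
          rw [if_neg (ne_of_mem_of_not_mem hi hk)]
        rw [e3]
        simp only [if_true]
        rw [sub_div, sub_mul]
        linarith

theorem farkas_eq {V ι κ : Type*} [AddCommGroup V] [Module ℝ V] [Fintype ι] [Fintype κ]
    (a : ι → V →ₗ[ℝ] ℝ) (e : κ → V →ₗ[ℝ] ℝ) (b : V →ₗ[ℝ] ℝ)
    (h : ∀ x, (∀ i, 0 ≤ a i x) → (∀ k, e k x = 0) → 0 ≤ b x) :
    ∃ (l : ι → ℝ) (m : κ → ℝ), (∀ i, 0 ≤ l i) ∧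
      ∀ x, b x = ∑ i, l i * a i x + ∑ k, m k * e k x := by
  classical
  obtain ⟨l, hl, hb⟩ := farkas_aux (Finset.univ : Finset (ι ⊕ κ ⊕ κ))
    (Sum.elim a (Sum.elim e (fun k => - e k))) b (fun x hx => by
      refine h x (fun i => hx (Sum.inl i) (Finset.mem_univ _)) (fun k => ?_)
      have h1 := hx (Sum.inr (Sum.inl k)) (Finset.mem_univ _)
      have h2 := hx (Sum.inr (Sum.inr k)) (Finset.mem_univ _)
      simp at h1 h2
      linarith)
  refine ⟨fun i => l (Sum.inl i), fun k => l (Sum.inr (Sum.inl k)) - l (Sum.inr (Sum.inr k)),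
    fun i => hl _, fun x => ?_⟩
  rw [hb x]
  simp [Fintype.sum_sum_type, sub_mul, Finset.sum_sub_distrib]
  ring

theorem exists_stationary {σ : Type} [Fintype σ] [DecidableEq σ] [Nonempty σ] (P : σ → σ → ℝ)
    (hP : RowStochastic P) :
    ∃ x : σ → ℝ, (∀ s, 0 ≤ x s) ∧ ∑ s, x s = 1 ∧ ∀ s', x s' = ∑ s, x s * P s s' := by
  by_contra hcon
  push Not at hcon
  let A : σ → (σ → ℝ) →ₗ[ℝ] ℝ := fun s => LinearMap.proj s
  let E : σ → (σ → ℝ) →ₗ[ℝ] ℝ := fun s' =>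
    LinearMap.proj s' - ∑ s, P s s' • LinearMap.proj s
  let B : (σ → ℝ) →ₗ[ℝ] ℝ := - ∑ s, LinearMap.proj s
  have hA : ∀ s x, A s x = x s := fun s x => rfl
  have hE : ∀ s' x, E s' x = x s' - ∑ s, x s * P s s' := fun s' x => by
    simp [E, mul_comm]
  have hB : ∀ x, B x = - ∑ s, x s := fun x => by simp [B]
  obtain ⟨l, m, hl, hb⟩ := farkas_eq A E B (fun x hx he => by
    rw [hB]
    by_contra hneg
    have hpos : 0 < ∑ s, x s := by linarith
    obtain ⟨s', hs'⟩ := hcon (fun s => x s / ∑ s, x s) (fun s => div_nonneg (hx s) hpos.le)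
      (by rw [← Finset.sum_div, div_self hpos.ne'])
    apply hs'
    have := he s'
    rw [hE] at this
    have h3 : x s' = ∑ s, x s * P s s' := by linarith
    rw [h3, Finset.sum_div]
    refine Finset.sum_congr rfl fun i _ => ?_
    ring)
  obtain ⟨s, -, hs⟩ := Finset.exists_max_image Finset.univ m Finset.univ_nonempty
  have h1 := hb (Pi.single s 1)
  simp only [hA, hB, hE, Pi.single_apply, Finset.sum_ite_eq', Finset.mem_univ, if_true, ite_mul,
    one_mul, zero_mul, mul_sub, Finset.sum_sub_distrib, mul_ite, mul_one, mul_zero] at h1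
  have h2 : ∑ k, m k * P s k ≤ m s := by
    calc ∑ k, m k * P s k ≤ ∑ k, m s * P s k :=
          Finset.sum_le_sum fun k _ => mul_le_mul_of_nonneg_right (hs k (Finset.mem_univ _))
            (hP.1 s k)
      _ = m s := by rw [← Finset.mul_sum, hP.2 s, mul_one]
  have := hl s
  linarith

section RMABproof

variable {N : ℕ} {S : Fin N → Type} [∀ n, Fintype (S n)] [∀ n, DecidableEq (S n)]

theorem fp_nonempty [∀ n, Nonempty (S n)] (α : ℝ) (hα0 : 0 < α)
    (P : ∀ n, Bool → S n → S n → ℝ) (hP : ∀ n a, RowStochastic (P n a)) :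
    ∃ y, FPFeasible P α y := by
  choose x hx0 hx1 hx2 using fun n => exists_stationary (P n false) (hP n false)
  refine ⟨fun n s a => if a then 0 else x n s, fun n => ⟨fun s a => ?_, ?_⟩, ?_, fun n s' => ?_⟩
  · cases a <;> simp [hx0]
  · simpa using hx1 n
  · simp only [BudgetFeasible, if_true, Finset.sum_const_zero]
    positivity
  · simpa [nextVec] using hx2 n s'

theorem fp_exists_opt [∀ n, Nonempty (S n)] (α : ℝ) (hα0 : 0 < α)
    (P : ∀ n, Bool → S n → S n → ℝ) (hP : ∀ n a, RowStochastic (P n a))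
    (r : ∀ n, S n → Bool → ℝ) :
    ∃ y, FPFeasible P α y ∧ lpReward r y = gain P r α ∧
      ∀ z, FPFeasible P α z → lpReward r z ≤ gain P r α := by
  have hcl : IsClosed {y : ∀ n, S n → Bool → ℝ | FPFeasible P α y} := by
    have e : {y : ∀ n, S n → Bool → ℝ | FPFeasible P α y} =
      ((⋂ n, ⋂ s, ⋂ a, {y | 0 ≤ y n s a}) ∩
        (⋂ n, {y | (∑ s, (y n s false + y n s true)) = 1})) ∩
      ({y | (∑ n, ∑ s, y n s true) ≤ (N : ℝ) * α} ∩
      (⋂ n, ⋂ s', {y | y n s' false + y n s' true =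
        ∑ s, (y n s false * P n false s s' + y n s true * P n true s s')})) := by
      ext y
      simp only [FPFeasible, IsSA, BudgetFeasible, nextVec, Set.mem_ofPred_eq, Set.mem_inter_iff,
        Set.mem_iInter, forall_and]
    rw [e]
    refine ((isClosed_iInter fun n => isClosed_iInter fun s => isClosed_iInter fun a =>
      isClosed_le (by fun_prop) (by fun_prop)).inter (isClosed_iInter fun n =>
      isClosed_eq (by fun_prop) (by fun_prop))).inter
      ((isClosed_le (by fun_prop) (by fun_prop)).inter (isClosed_iInter fun n =>
      isClosed_iInter fun s => isClosed_eq (by fun_prop) (by fun_prop)))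
  have hcpt : IsCompact {y : ∀ n, S n → Bool → ℝ | FPFeasible P α y} := by
    refine IsCompact.of_isClosed_subset (isCompact_Icc (a := (0 : ∀ n, S n → Bool → ℝ))
      (b := fun _ _ _ => 1)) hcl ?_
    intro y hy
    refine ⟨fun n s a => (hy.1 n).1 s a, fun n s a => ?_⟩
    have h1 := (hy.1 n).2
    have h0 := (hy.1 n).1
    have h2 : y n s false + y n s true ≤ ∑ s, (y n s false + y n s true) :=
      Finset.single_le_sum (f := fun s => y n s false + y n s true)
        (fun s _ => add_nonneg (h0 s false) (h0 s true)) (Finset.mem_univ s)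
    have h3 := h0 s false
    have h4 := h0 s true
    cases a <;> show y n s _ ≤ (1 : ℝ) <;> linarith
  have hcont : Continuous (fun y : ∀ n, S n → Bool → ℝ => lpReward r y) := by
    unfold lpReward
    fun_prop
  obtain ⟨y, hy, hmax⟩ := hcpt.exists_isMaxOn (fp_nonempty α hα0 P hP) hcont.continuousOn
  have hg : IsGreatest {v | ∃ y : ∀ n, S n → Bool → ℝ, FPFeasible P α y ∧ v = lpReward r y}
      (lpReward r y) := by
    refine ⟨⟨y, hy, rfl⟩, ?_⟩
    rintro v ⟨z, hz, rfl⟩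
    exact hmax hz
  have hge : gain P r α = lpReward r y := hg.csSup_eq
  exact ⟨y, hy, hge.symm, fun z hz => hge ▸ hmax hz⟩

theorem nextVec_smul {σ : Type} [Fintype σ] (P : Bool → σ → σ → ℝ) (c : ℝ) (y : σ → Bool → ℝ)
    (s' : σ) : nextVec P (fun s a => c * y s a) s' = c * nextVec P y s' := by
  unfold nextVec
  rw [Finset.mul_sum]
  exact Finset.sum_congr rfl fun s _ => by ring

theorem nextVec_add {σ : Type} [Fintype σ] (P : Bool → σ → σ → ℝ) (y z : σ → Bool → ℝ)
    (s' : σ) : nextVec P (fun s a => y s a + z s a) s' = nextVec P y s' + nextVec P z s' := by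
  unfold nextVec
  rw [← Finset.sum_add_distrib]
  exact Finset.sum_congr rfl fun s _ => by ring

theorem lpReward_smul (r : ∀ n, S n → Bool → ℝ) (c : ℝ) (y : ∀ n, S n → Bool → ℝ) :
    lpReward r (fun n s a => c * y n s a) = c * lpReward r y := by
  unfold lpReward
  rw [mul_left_comm, Finset.mul_sum (a := c)]
  congr 1
  refine Finset.sum_congr rfl fun n _ => ?_
  rw [Finset.mul_sum]
  exact Finset.sum_congr rfl fun s _ => by ring

theorem lpReward_add (r : ∀ n, S n → Bool → ℝ) (y z : ∀ n, S n → Bool → ℝ) :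
    lpReward r (fun n s a => y n s a + z n s a) = lpReward r y + lpReward r z := by
  unfold lpReward
  rw [← mul_add, ← Finset.sum_add_distrib]
  congr 1
  refine Finset.sum_congr rfl fun n _ => ?_
  rw [← Finset.sum_add_distrib]
  exact Finset.sum_congr rfl fun s _ => by ring

theorem fp_dual (hN : 1 ≤ N) (α : ℝ) (P : ∀ n, Bool → S n → S n → ℝ)
    (r : ∀ n, S n → Bool → ℝ) (g : ℝ) (hg : ∀ z, FPFeasible P α z → lpReward r z ≤ g) :
    ∃ m : ∀ n, S n → ℝ, ∀ y : ∀ n, S n → Bool → ℝ, (∀ n, IsSA (y n)) → BudgetFeasible α y →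
      0 ≤ g - lpReward r y + ∑ n, ∑ s, m n s *
            ((y n s false + y n s true) - nextVec (P n) (y n) s) := by
  let A : ((Σ n, S n × Bool) ⊕ Unit) → ((∀ n, S n → Bool → ℝ) × ℝ) →ₗ[ℝ] ℝ := Sum.elim
    (fun i => IsLinearMap.mk' (fun p : (∀ n, S n → Bool → ℝ) × ℝ => p.1 i.1 i.2.1 i.2.2)
      ⟨fun p q => by simp, fun c p => by simp⟩)
    (fun _ => IsLinearMap.mk' (fun p : (∀ n, S n → Bool → ℝ) × ℝ => (N : ℝ) * α * p.2 - ∑ n, ∑ s, p.1 n s true)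
      ⟨fun p q => by simp [Finset.sum_add_distrib]; ring,
       fun c p => by simp [← Finset.mul_sum]; ring⟩)
  let E : (Fin N ⊕ (Σ n, S n)) → ((∀ n, S n → Bool → ℝ) × ℝ) →ₗ[ℝ] ℝ := Sum.elim
    (fun n => IsLinearMap.mk' (fun p : (∀ n, S n → Bool → ℝ) × ℝ => ∑ s, (p.1 n s false + p.1 n s true) - p.2)
      ⟨fun p q => by simp [Finset.sum_add_distrib]; ring,
       fun c p => by simp [← Finset.mul_sum, Finset.sum_add_distrib]; ring⟩)
    (fun i => IsLinearMap.mk' (fun p : (∀ n, S n → Bool → ℝ) × ℝ => p.1 i.1 i.2 false + p.1 i.1 i.2 true -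
        nextVec (P i.1) (p.1 i.1) i.2)
      ⟨fun p q => by
        have := nextVec_add (P i.1) (p.1 i.1) (q.1 i.1) i.2
        change _ - nextVec (P i.1) (fun s a => p.1 i.1 s a + q.1 i.1 s a) i.2 = _
        rw [this]; simp; ring,
       fun c p => by
        have := nextVec_smul (P i.1) c (p.1 i.1) i.2
        change _ - nextVec (P i.1) (fun s a => c * p.1 i.1 s a) i.2 = _
        rw [this]; simp; ring⟩)
  let B : ((∀ n, S n → Bool → ℝ) × ℝ) →ₗ[ℝ] ℝ := IsLinearMap.mk' (fun p : (∀ n, S n → Bool → ℝ) × ℝ => g * p.2 - lpReward r p.1)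
      ⟨fun p q => by
        change _ - lpReward r (fun n s a => p.1 n s a + q.1 n s a) = _
        rw [lpReward_add]; simp; ring,
       fun c p => by
        change _ - lpReward r (fun n s a => c * p.1 n s a) = _
        rw [lpReward_smul]; simp; ring⟩
  obtain ⟨l, m, hl, hb⟩ := farkas_eq A E B (by
    rintro ⟨y, t⟩ hA hE
    have h0 : ∀ n s a, 0 ≤ y n s a := fun n s a => hA (Sum.inl ⟨n, s, a⟩)
    have hbud : 0 ≤ (N : ℝ) * α * t - ∑ n, ∑ s, y n s true := hA (Sum.inr ())
    have hm : ∀ n, ∑ s, (y n s false + y n s true) - t = 0 := fun n => hE (Sum.inl n)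
    have hf : ∀ n s, y n s false + y n s true - nextVec (P n) (y n) s = 0 :=
      fun n s => hE (Sum.inr ⟨n, s⟩)
    change 0 ≤ g * t - lpReward r y
    have ht : 0 ≤ t := by
      have := hm ⟨0, hN⟩
      have h2 : 0 ≤ ∑ s, (y ⟨0, hN⟩ s false + y ⟨0, hN⟩ s true) :=
        Finset.sum_nonneg fun s _ => add_nonneg (h0 _ _ _) (h0 _ _ _)
      linarith
    rcases ht.eq_or_lt with rfl | ht
    · have hz : ∀ n s a, y n s a = 0 := by
        intro n s a
        have h1 : ∑ s, (y n s false + y n s true) = 0 := by linarith [hm n]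
        have h2 := (Finset.sum_eq_zero_iff_of_nonneg
          (fun s _ => add_nonneg (h0 n s false) (h0 n s true))).1 h1 s (Finset.mem_univ _)
        have h3 := h0 n s false
        have h4 := h0 n s true
        cases a <;> linarith
      simp [lpReward, hz]
    · have hfe : FPFeasible P α (fun n s a => t⁻¹ * y n s a) := by
        refine ⟨fun n => ⟨fun s a => mul_nonneg (inv_nonneg.2 ht.le) (h0 n s a), ?_⟩, ?_,
          fun n s' => ?_⟩
        · simp only [← mul_add, ← Finset.mul_sum]
          rw [show ∑ s, (y n s false + y n s true) = t by linarith [hm n],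
            inv_mul_cancel₀ ht.ne']
        · simp only [BudgetFeasible, ← Finset.mul_sum]
          rw [inv_mul_le_iff₀ ht]
          linarith
        · rw [nextVec_smul, ← mul_add]
          rw [show y n s' false + y n s' true = nextVec (P n) (y n) s' by linarith [hf n s']]
      have := hg _ hfe
      rw [lpReward_smul, inv_mul_le_iff₀ ht] at this
      linarith)
  refine ⟨fun n s => - m (Sum.inr ⟨n, s⟩), fun y hy hbud => ?_⟩
  have h := hb (y, 1)
  have e1 : B (y, 1) = g * 1 - lpReward r y := rfl
  have e2 : 0 ≤ ∑ i, l i * A i (y, 1) := by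
    refine Finset.sum_nonneg fun i _ => mul_nonneg (hl i) ?_
    rcases i with ⟨n, s, a⟩ | u
    · exact (hy n).1 s a
    · change 0 ≤ (N : ℝ) * α * 1 - ∑ n, ∑ s, y n s true
      have : (∑ n, ∑ s, y n s true) ≤ (N : ℝ) * α := hbud
      linarith
  have e3 : ∑ k, m k * E k (y, 1) = ∑ n, ∑ s, m (Sum.inr ⟨n, s⟩) *
      ((y n s false + y n s true) - nextVec (P n) (y n) s) := by
    rw [Fintype.sum_sum_type, Fintype.sum_sigma]
    have : ∀ n, E (Sum.inl n) (y, 1) = 0 := fun n => by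
      change ∑ s, (y n s false + y n s true) - 1 = 0
      rw [(hy n).2, sub_self]
    simp only [this, mul_zero, Finset.sum_const_zero, zero_add]
    rfl
  simp only [neg_mul, Finset.sum_neg_distrib]
  linarith

end RMABproof


/-- existence of a terminal vector making the rotated cost nonnegative on the
budget-feasible set, with equality at an optimal solution of the relaxed fixed-point LP. -/
theorem dissipativity_of_fixed_point
    {N : ℕ} {S : Fin N → Type} [∀ n, Fintype (S n)] [∀ n, DecidableEq (S n)]
    [∀ n, Nonempty (S n)]
    (hN : 1 ≤ N) (α : ℝ) (hα0 : 0 < α) (hα1 : α ≤ 1)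
    (P : ∀ n, Bool → S n → S n → ℝ) (hP : ∀ n a, RowStochastic (P n a))
    (r : ∀ n, S n → Bool → ℝ) (hr : ∀ n s a, 0 ≤ r n s a ∧ r n s a ≤ 1) :
    ∃ μ : ∀ n, S n → ℝ,
      (∀ y : ∀ n, S n → Bool → ℝ, (∀ n, IsSA (y n)) → BudgetFeasible α y →
        0 ≤ gain P r α - lpReward r y +
          (1 / (N : ℝ)) * ∑ n, ∑ s, μ n s *
            ((y n s false + y n s true) - nextVec (P n) (y n) s)) ∧
      ∃ ystar : ∀ n, S n → Bool → ℝ, FPFeasible P α ystar ∧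
        lpReward r ystar = gain P r α ∧
        gain P r α - lpReward r ystar +
          (1 / (N : ℝ)) * ∑ n, ∑ s, μ n s *
            ((ystar n s false + ystar n s true) - nextVec (P n) (ystar n) s) = 0 := by
  obtain ⟨ystar, hfe, hopt, hmax⟩ := fp_exists_opt α hα0 P hP r
  obtain ⟨m, hm⟩ := fp_dual hN α P r (gain P r α) hmax
  have hN0 : (N : ℝ) ≠ 0 := by
    have : 0 < N := hN
    positivity
  refine ⟨fun n s => N * m n s, fun y hy hbud => ?_, ystar, hfe, hopt, ?_⟩
  · have := hm y hy hbud
    simp only [mul_assoc, ← Finset.mul_sum]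
    rw [one_div, inv_mul_cancel_left₀ hN0]
    exact this
  · rw [hopt]
    have : ∀ n s, (ystar n s false + ystar n s true) - nextVec (P n) (ystar n) s = 0 :=
      fun n s => by rw [hfe.2.2 n s, sub_self]
    simp [this]
end

section
/- Fix a terminal vector μ, a horizon τ ≥ 1, and an initial condition x. Then: (i) for every λ ∈ [0,∞)^τ the Lagrangian decomposes as L_τ^μ(x,λ) = α·∑_{t=0}^{τ−1} λ_t + (1/N)·∑_{n=1}^N V_n^τ(x^{(n)},λ), where V_n^τ(x^{(n)},λ) is the per-arm value defined below; (ii) weak duality holds: V_τ^μ(x) ≤ L_τ^μ(x,λ) for every λ ∈ [0,∞)^τ; (iii) the map λ ↦ L_τ^μ(x,λ) is convex on [0,∞)^τ; and (iv) strong duality holds: there exists λ* ∈ [0,∞)^τ with L_τ^μ(x,λ*) = V_τ^μ(x). -/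
open Finset Filter

section helpers

/-- Feasible single-arm trajectories. -/
def AF {σ : Type} [Fintype σ] (P : Bool → σ → σ → ℝ) (τ : ℕ) (x : σ → ℝ)
    (z : ℕ → σ → Bool → ℝ) : Prop :=
  (∀ t, t ≤ τ → IsSA (z t)) ∧ (∀ s, z 0 s false + z 0 s true = x s) ∧
    (∀ t, t < τ → ∀ s', z (t + 1) s' false + z (t + 1) s' true = nextVec P (z t) s')

/-- Single-arm objective. -/
noncomputable def AO {σ : Type} [Fintype σ] (r : σ → Bool → ℝ) (μ : σ → ℝ) (τ : ℕ) (lam : ℕ → ℝ)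
    (z : ℕ → σ → Bool → ℝ) : ℝ :=
  (∑ t ∈ Finset.range τ,
        ((∑ s, (r s false * z t s false + r s true * z t s true)) -
          lam t * ∑ s, z t s true)) +
      ∑ s, μ s * (z τ s false + z τ s true)

noncomputable def pas {σ : Type} [Fintype σ] (P : Bool → σ → σ → ℝ) (x : σ → ℝ) :
    ℕ → σ → Bool → ℝ
  | 0 => fun s a => if a then 0 else x s
  | t + 1 => fun s a => if a then 0 else nextVec P (pas P x t) s

lemma isSA_nextVec {σ : Type} [Fintype σ] {P : Bool → σ → σ → ℝ} (hP : ∀ a, RowStochastic (P a))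
    {y : σ → Bool → ℝ} (hy : IsSA y) :
    IsSA (fun s (a : Bool) => if a then 0 else nextVec P y s) := by
  constructor
  · intro s a
    cases a
    · simp only [Bool.false_eq_true, if_false]
      exact Finset.sum_nonneg fun i _ => add_nonneg
        (mul_nonneg (hy.1 _ _) ((hP _).1 _ _)) (mul_nonneg (hy.1 _ _) ((hP _).1 _ _))
    · simp
  · simp only [Bool.false_eq_true, if_false, if_true, add_zero]
    unfold nextVec
    rw [Finset.sum_comm, ← hy.2]
    refine Finset.sum_congr rfl fun s _ => ?_
    rw [Finset.sum_add_distrib, ← Finset.mul_sum, ← Finset.mul_sum, (hP _).2, (hP _).2]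
    ring

lemma pas_true {σ : Type} [Fintype σ] (P : Bool → σ → σ → ℝ) (x : σ → ℝ) (t : ℕ) (s : σ) :
    pas P x t s true = 0 := by
  cases t <;> simp [pas]

lemma pas_isSA {σ : Type} [Fintype σ] {P : Bool → σ → σ → ℝ} (hP : ∀ a, RowStochastic (P a))
    {x : σ → ℝ} (hx : IsProbVec x) (t : ℕ) : IsSA (pas P x t) := by
  induction t with
  | zero =>
    constructor
    · intro s a
      cases a
      · simpa [pas] using hx.1 s
      · simp [pas]
    · simpa [pas] using hx.2
  | succ t ih => exact isSA_nextVec hP ih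

lemma pas_AF {σ : Type} [Fintype σ] {P : Bool → σ → σ → ℝ} (hP : ∀ a, RowStochastic (P a))
    {x : σ → ℝ} (hx : IsProbVec x) (τ : ℕ) : AF P τ x (pas P x) := by
  refine ⟨fun t _ => pas_isSA hP hx t, fun s => by simp [pas], fun t _ s => by simp [pas]⟩

lemma AO_bdd {σ : Type} [Fintype σ] (P : Bool → σ → σ → ℝ) (r : σ → Bool → ℝ)
    (hr : ∀ s a, 0 ≤ r s a ∧ r s a ≤ 1) (μ : σ → ℝ) (τ : ℕ) (x : σ → ℝ) (lam : ℕ → ℝ) :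
    ∃ B, ∀ z, AF P τ x z → AO r μ τ lam z ≤ B := by
  refine ⟨(∑ t ∈ Finset.range τ, (1 + |lam t|)) + ∑ s, |μ s|, fun z hz => ?_⟩
  unfold AO
  refine add_le_add (Finset.sum_le_sum fun t ht => ?_) (Finset.sum_le_sum fun s _ => ?_)
  · obtain ⟨h0, h1⟩ := hz.1 t (Finset.mem_range.1 ht).le
    have e1 : ∑ s, (r s false * z t s false + r s true * z t s true) ≤ 1 := by
      rw [← h1]
      refine Finset.sum_le_sum fun s _ => add_le_add ?_ ?_
      · exact mul_le_of_le_one_left (h0 _ _) (hr _ _).2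
      · exact mul_le_of_le_one_left (h0 _ _) (hr _ _).2
    have e2 : 0 ≤ ∑ s, z t s true := Finset.sum_nonneg fun s _ => h0 _ _
    have e3 : ∑ s, z t s true ≤ 1 := by
      rw [← h1]
      exact Finset.sum_le_sum fun s _ => by linarith [h0 s false]
    have e4 : -lam t * ∑ s, z t s true ≤ |lam t| := by
      calc -lam t * ∑ s, z t s true ≤ |lam t| * ∑ s, z t s true :=
            mul_le_mul_of_nonneg_right (neg_le_abs _) e2
        _ ≤ |lam t| := mul_le_of_le_one_right (abs_nonneg _) e3
    linarith
  · obtain ⟨h0, h1⟩ := hz.1 τ le_rfl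
    have e0 : 0 ≤ z τ s false + z τ s true := add_nonneg (h0 _ _) (h0 _ _)
    have e1 : z τ s false + z τ s true ≤ 1 := by
      rw [← h1]
      exact Finset.single_le_sum (f := fun s => z τ s false + z τ s true)
        (fun s _ => add_nonneg (h0 _ _) (h0 _ _)) (Finset.mem_univ s)
    calc μ s * (z τ s false + z τ s true) ≤ |μ s| * (z τ s false + z τ s true) :=
          mul_le_mul_of_nonneg_right (le_abs_self _) e0
      _ ≤ |μ s| := mul_le_of_le_one_right (abs_nonneg _) e1

lemma AF_convex {σ : Type} [Fintype σ] {P : Bool → σ → σ → ℝ} {τ : ℕ} {x : σ → ℝ}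
    {z w : ℕ → σ → Bool → ℝ} (hz : AF P τ x z) (hw : AF P τ x w) {a b : ℝ} (ha : 0 ≤ a)
    (hb : 0 ≤ b) (hab : a + b = 1) : AF P τ x (fun t s c => a * z t s c + b * w t s c) := by
  refine ⟨fun t ht => ⟨fun s c => ?_, ?_⟩, fun s => ?_, fun t ht s => ?_⟩
  · exact add_nonneg (mul_nonneg ha ((hz.1 t ht).1 _ _)) (mul_nonneg hb ((hw.1 t ht).1 _ _))
  · have h1 := (hz.1 t ht).2
    have h2 := (hw.1 t ht).2
    calc _ = a * (∑ s, (z t s false + z t s true)) + b * (∑ s, (w t s false + w t s true)) := by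
          rw [Finset.mul_sum, Finset.mul_sum, ← Finset.sum_add_distrib]
          exact Finset.sum_congr rfl fun s _ => by ring
      _ = 1 := by rw [h1, h2]; linarith
  · have h1 := hz.2.1 s
    have h2 := hw.2.1 s
    calc _ = a * (z 0 s false + z 0 s true) + b * (w 0 s false + w 0 s true) := by ring
      _ = x s := by rw [h1, h2, ← add_mul, hab, one_mul]
  · have h1 := hz.2.2 t ht s
    have h2 := hw.2.2 t ht s
    calc _ = a * (z (t+1) s false + z (t+1) s true) + b * (w (t+1) s false + w (t+1) s true) := by
          ring
      _ = _ := by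
          rw [h1, h2]
          unfold nextVec
          rw [Finset.mul_sum, Finset.mul_sum, ← Finset.sum_add_distrib]
          exact Finset.sum_congr rfl fun s _ => by ring

/-- Passive at the last time. -/
lemma AF_last {σ : Type} [Fintype σ] {P : Bool → σ → σ → ℝ} {τ : ℕ} {x : σ → ℝ}
    {z : ℕ → σ → Bool → ℝ} (hz : AF P τ x z) (hτ : 1 ≤ τ) :
    AF P τ x (fun t s c => if t = τ then (if c then 0 else z τ s false + z τ s true) else z t s c)
      := by
  refine ⟨fun t ht => ?_, fun s => ?_, fun t ht s => ?_⟩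
  · by_cases h : t = τ
    · subst h
      obtain ⟨h0, h1⟩ := hz.1 t le_rfl
      refine ⟨fun s c => ?_, ?_⟩
      · cases c
        · simpa using add_nonneg (h0 _ _) (h0 _ _)
        · simp
      · simpa using h1
    · simpa [h] using hz.1 t ht
  · have : (0 : ℕ) ≠ τ := by omega
    simpa [this] using hz.2.1 s
  · have h1 : t ≠ τ := by omega
    have h2 := hz.2.2 t ht s
    by_cases h : t + 1 = τ
    · simpa [h, h1] using h2
    · simpa [h, h1] using h2

lemma separation {ι : Type} [Fintype ι] [DecidableEq ι] (C : Set ((ι → ℝ) × ℝ)) (hC : Convex ℝ C)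
    (V : ℝ) (hs : ∃ p ∈ C, ∀ i, p.1 i < 0) (hV : ∀ p ∈ C, (∀ i, p.1 i ≤ 0) → p.2 ≤ V) :
    ∃ l : ι → ℝ, (∀ i, 0 ≤ l i) ∧ ∀ p ∈ C, p.2 - ∑ i, l i * p.1 i ≤ V := by
  let A : Set ((ι → ℝ) × ℝ) := {q | ∃ p ∈ C, (∀ i, p.1 i < q.1 i) ∧ q.2 < p.2}
  have hAc : Convex ℝ A := by
    rintro q ⟨p, hp, h1, h2⟩ q' ⟨p', hp', h1', h2'⟩ a b ha hb hab
    refine ⟨a • p + b • p', hC hp hp' ha hb hab, fun i => ?_, ?_⟩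
    · simp only [Prod.fst_add, Prod.smul_fst, Pi.add_apply, Pi.smul_apply, smul_eq_mul]
      rcases ha.eq_or_lt with h | h
      · subst h
        have : b = 1 := by linarith
        subst this
        simpa using h1' i
      · have := mul_lt_mul_of_pos_left (h1 i) h
        have := mul_le_mul_of_nonneg_left (h1' i).le hb
        linarith
    · simp only [Prod.snd_add, Prod.smul_snd, smul_eq_mul]
      rcases ha.eq_or_lt with h | h
      · subst h
        have : b = 1 := by linarith
        subst this
        simpa using h2'
      · have := mul_lt_mul_of_pos_left h2 h
        have := mul_le_mul_of_nonneg_left h2'.le hb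
        linarith
  have hAo : IsOpen A := by
    have : A = ⋃ p ∈ C, {q : (ι → ℝ) × ℝ | (∀ i, p.1 i < q.1 i) ∧ q.2 < p.2} := by
      ext q
      simp only [A, Set.mem_setOf_eq, Set.mem_iUnion, exists_prop]
    rw [this]
    refine isOpen_biUnion fun p _ => ?_
    have e : {q : (ι → ℝ) × ℝ | (∀ i, p.1 i < q.1 i) ∧ q.2 < p.2} =
        (⋂ i, {q : (ι → ℝ) × ℝ | p.1 i < q.1 i}) ∩ {q : (ι → ℝ) × ℝ | q.2 < p.2} := by
      ext q
      simp
    rw [e]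
    refine IsOpen.inter ?_ ?_
    · exact isOpen_iInter_of_finite fun i =>
        isOpen_lt continuous_const ((continuous_apply i).comp continuous_fst)
    · exact isOpen_lt continuous_snd continuous_const
  have hn : ((0 : ι → ℝ), V) ∉ A := by
    rintro ⟨p, hp, h1, h2⟩
    exact absurd (hV p hp fun i => (h1 i).le) (not_le.2 h2)
  obtain ⟨φ, hφ⟩ := geometric_hahn_banach_open_point hAc hAo hn
  let c : ι → ℝ := fun i => φ (Pi.single i 1, 0)
  let d : ℝ := φ (0, 1)
  have hrep : ∀ u v, φ (u, v) = (∑ i, u i * c i) + v * d := by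
    intro u v
    have e : ((u, v) : (ι → ℝ) × ℝ) = (∑ i, u i • ((Pi.single i 1 : ι → ℝ), (0:ℝ))) + v • (0, 1) := by
      refine Prod.ext ?_ ?_
      · funext j
        simp [Prod.fst_sum, Finset.sum_apply, Pi.single_apply]
      · simp [Prod.snd_sum]
    rw [e, map_add, map_sum]
    simp only [map_smul, smul_eq_mul]
    rfl
  obtain ⟨p0, hp0, hlt⟩ := hs
  have key : ∀ p ∈ C, ∀ (u : ι → ℝ) (v : ℝ), (∀ i, 0 < u i) → 0 < v →
      (∑ i, (p.1 i + u i) * c i) + (p.2 - v) * d < V * d := by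
    intro p hp u v hu hv
    have := hφ (p.1 + u, p.2 - v) ⟨p, hp, fun i => by simpa using hu i, by simpa using hv⟩
    rw [hrep, hrep] at this
    simpa using this
  have key2 : ∀ p ∈ C, ∀ (u : ι → ℝ) (v : ℝ), (∀ i, 0 ≤ u i) → 0 ≤ v →
      (∑ i, (p.1 i + u i) * c i) + (p.2 - v) * d ≤ V * d := by
    intro p hp u v hu hv
    have ht : Filter.Tendsto (fun ε : ℝ => (∑ i, (p.1 i + (u i + ε)) * c i) + (p.2 - (v + ε)) * d)
        (nhdsWithin 0 (Set.Ioi 0)) (nhds ((∑ i, (p.1 i + (u i + 0)) * c i) + (p.2 - (v + 0)) * d)) := by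
      apply Filter.Tendsto.mono_left _ nhdsWithin_le_nhds
      apply Continuous.tendsto (f := fun ε : ℝ => (∑ i, (p.1 i + (u i + ε)) * c i) + (p.2 - (v + ε)) * d)
      fun_prop
    simp only [add_zero] at ht
    refine le_of_tendsto ht ?_
    filter_upwards [self_mem_nhdsWithin] with ε hε
    have hε : 0 < ε := hε
    exact (key p hp (fun i => u i + ε) (v + ε) (fun i => by linarith [hu i]) (by linarith)).le
  have hc : ∀ i, c i ≤ 0 := by
    intro j
    by_contra! h
    set K := V * d - ((∑ i, p0.1 i * c i) + p0.2 * d) with hK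
    have h1 := key2 p0 hp0 (Pi.single j ((|K| + 1) / c j)) 0
      (fun i => by
        by_cases hij : i = j
        · subst hij; simp; positivity
        · simp [hij]) le_rfl
    have e : ∑ i, (p0.1 i + (Pi.single j ((|K| + 1) / c j) : ι → ℝ) i) * c i
        = (∑ i, p0.1 i * c i) + (|K| + 1) := by
      simp only [add_mul, Finset.sum_add_distrib]
      congr 1
      simp [Pi.single_apply, h.ne']
    rw [e] at h1
    have := le_abs_self K
    simp only [sub_zero] at h1
    linarith
  have hd0 : 0 ≤ d := by
    by_contra! h
    set K := V * d - ((∑ i, p0.1 i * c i) + p0.2 * d) with hK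
    have h1 := key2 p0 hp0 0 ((|K| + 1) / (-d)) (fun i => le_rfl)
      (div_nonneg (by positivity) (by linarith))
    have e : (p0.2 - (|K| + 1) / (-d)) * d = p0.2 * d + (|K| + 1) := by
      field_simp [h.ne]
      ring
    rw [e] at h1
    have := le_abs_self K
    simp only [Pi.zero_apply, add_zero] at h1
    linarith
  have hd : 0 < d := by
    refine lt_of_le_of_ne hd0 fun h => ?_
    have h1 := key p0 hp0 (fun i => - p0.1 i) 1 (fun i => by linarith [hlt i]) one_pos
    simp [← h] at h1
  refine ⟨fun i => - c i / d, fun i => div_nonneg (by linarith [hc i]) hd0, fun p hp => ?_⟩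
  have h1 := key2 p hp 0 0 (fun i => le_rfl) le_rfl
  simp only [Pi.zero_apply, add_zero, sub_zero] at h1
  have e : ∑ i, -c i / d * p.1 i = - (∑ i, p.1 i * c i) / d := by
    rw [← Finset.sum_neg_distrib, Finset.sum_div]
    exact Finset.sum_congr rfl fun i _ => by ring
  rw [e]
  have : p.2 - -(∑ i, p.1 i * c i) / d = ((∑ i, p.1 i * c i) + p.2 * d) / d := by
    field_simp
    ring
  rw [this, div_le_iff₀ hd]
  exact h1

variable {N : ℕ} {S : Fin N → Type} [∀ n, Fintype (S n)] [∀ n, DecidableEq (S n)]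

/-- Joint primal objective. -/
noncomputable def PO (r : ∀ n, S n → Bool → ℝ) (μ : ∀ n, S n → ℝ) (τ : ℕ)
    (y : ℕ → ∀ n, S n → Bool → ℝ) : ℝ :=
  (∑ t ∈ Finset.range τ, lpReward r (y t)) +
      (1 / (N : ℝ)) * ∑ n, ∑ s, μ n s * (y τ n s false + y τ n s true)

/-- Joint slack. -/
noncomputable def SL (α : ℝ) (y : ∀ n, S n → Bool → ℝ) : ℝ :=
  α - (1 / (N : ℝ)) * ∑ n, ∑ s, y n s true

noncomputable def LO (r : ∀ n, S n → Bool → ℝ) (α : ℝ) (μ : ∀ n, S n → ℝ) (τ : ℕ) (lam : ℕ → ℝ)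
    (y : ℕ → ∀ n, S n → Bool → ℝ) : ℝ :=
  PO r μ τ y + ∑ t ∈ Finset.range τ, lam t * SL α (y t)

lemma LO_eq (hN : 1 ≤ N) (r : ∀ n, S n → Bool → ℝ) (α : ℝ) (μ : ∀ n, S n → ℝ) (τ : ℕ) (lam : ℕ → ℝ)
    (y : ℕ → ∀ n, S n → Bool → ℝ) :
    LO r α μ τ lam y = α * (∑ t ∈ Finset.range τ, lam t) +
      (1 / (N : ℝ)) * ∑ n, AO (r n) (μ n) τ lam (fun t => y t n) := by
  unfold LO PO SL AO lpReward
  rw [Finset.sum_add_distrib, Finset.sum_comm (s := Finset.univ) (t := Finset.range τ)]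
  simp only [Finset.sum_sub_distrib, mul_sub, mul_add, ← Finset.mul_sum, Finset.sum_sub_distrib]
  rw [← Finset.sum_mul]
  have : ∑ t ∈ Finset.range τ, lam t * (1 / (N : ℝ) * ∑ n, ∑ s, y t n s true)
      = 1 / (N : ℝ) * ∑ t ∈ Finset.range τ, lam t * ∑ n, ∑ s, y t n s true := by
    rw [Finset.mul_sum]
    exact Finset.sum_congr rfl fun t _ => by ring
  rw [this]
  ring

lemma Lag_eq (P : ∀ n, Bool → S n → S n → ℝ) (r : ∀ n, S n → Bool → ℝ) (α : ℝ)
    (μ : ∀ n, S n → ℝ) (τ : ℕ) (x : ∀ n, S n → ℝ) (lam : ℕ → ℝ) :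
    Lag P r α μ τ x lam = sSup {v | ∃ y : ℕ → ∀ n, S n → Bool → ℝ,
      (∀ n, AF (P n) τ (x n) (fun t => y t n)) ∧ v = LO r α μ τ lam y} := by
  unfold Lag
  congr 1
  ext v
  have e : ∀ y : ℕ → ∀ n, S n → Bool → ℝ, LO r α μ τ lam y = (∑ t ∈ Finset.range τ,
        (lpReward r (y t) + lam t * (α - (1 / (N : ℝ)) * ∑ n, ∑ s, y t n s true))) +
      (1 / (N : ℝ)) * ∑ n, ∑ s, μ n s * (y τ n s false + y τ n s true) := by
    intro y
    unfold LO PO SL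
    rw [Finset.sum_add_distrib]
    ring
  constructor
  · rintro ⟨y, h1, h2, h3, h4⟩
    exact ⟨y, fun n => ⟨fun t ht => h1 t ht n, h2 n, fun t ht => h3 t ht n⟩, by rw [e, h4]⟩
  · rintro ⟨y, h1, h4⟩
    exact ⟨y, fun t ht n => (h1 n).1 t ht, fun n => (h1 n).2.1, fun t ht n => (h1 n).2.2 t ht,
      by rw [h4, e]⟩

lemma Vfin_eq (P : ∀ n, Bool → S n → S n → ℝ) (r : ∀ n, S n → Bool → ℝ) (α : ℝ)
    (μ : ∀ n, S n → ℝ) (τ : ℕ) (x : ∀ n, S n → ℝ) :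
    Vfin P r α μ τ x = sSup {v | ∃ y : ℕ → ∀ n, S n → Bool → ℝ,
      (∀ n, AF (P n) τ (x n) (fun t => y t n)) ∧ (∀ t, t ≤ τ → BudgetFeasible α (y t)) ∧
      v = PO r μ τ y} := by
  unfold Vfin
  congr 1
  ext v
  constructor
  · rintro ⟨y, h1, h2, h3, h4, h5⟩
    exact ⟨y, fun n => ⟨fun t ht => h1 t ht n, h2 n, fun t ht => h3 t ht n⟩, h4, h5⟩
  · rintro ⟨y, h1, h4, h5⟩
    exact ⟨y, fun t ht n => (h1 n).1 t ht, fun n => (h1 n).2.1, fun t ht n => (h1 n).2.2 t ht,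
      h4, h5⟩

lemma SL_nonneg_iff (hN : 1 ≤ N) (α : ℝ) (y : ∀ n, S n → Bool → ℝ) :
    0 ≤ SL α y ↔ BudgetFeasible α y := by
  unfold SL BudgetFeasible
  have : (0 : ℝ) < N := by exact_mod_cast hN
  rw [sub_nonneg, one_div, inv_mul_le_iff₀ this]

lemma SL_comb (α a b : ℝ) (hab : a + b = 1) (y w : ∀ n, S n → Bool → ℝ) :
    SL α (fun n s c => a * y n s c + b * w n s c) = a * SL α y + b * SL α w := by
  unfold SL
  simp only [Finset.sum_add_distrib, ← Finset.mul_sum]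
  linear_combination (-α) * hab

lemma PO_comb (r : ∀ n, S n → Bool → ℝ) (μ : ∀ n, S n → ℝ) (τ : ℕ) (a b : ℝ)
    (y w : ℕ → ∀ n, S n → Bool → ℝ) :
    PO r μ τ (fun t n s c => a * y t n s c + b * w t n s c) = a * PO r μ τ y + b * PO r μ τ w := by
  have e1 : ∀ t, lpReward r (fun n s c => a * y t n s c + b * w t n s c)
      = a * lpReward r (y t) + b * lpReward r (w t) := by
    intro t
    unfold lpReward
    simp only [Finset.mul_sum, ← Finset.sum_add_distrib]
    exact Finset.sum_congr rfl fun n _ => Finset.sum_congr rfl fun s _ => by ring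
  have e2 : (1 / (N : ℝ)) * ∑ n, ∑ s, μ n s * ((a * y τ n s false + b * w τ n s false) +
        (a * y τ n s true + b * w τ n s true))
      = a * ((1 / (N : ℝ)) * ∑ n, ∑ s, μ n s * (y τ n s false + y τ n s true)) +
        b * ((1 / (N : ℝ)) * ∑ n, ∑ s, μ n s * (w τ n s false + w τ n s true)) := by
    simp only [Finset.mul_sum, ← Finset.sum_add_distrib]
    exact Finset.sum_congr rfl fun n _ => Finset.sum_congr rfl fun s _ => by ring
  unfold PO
  rw [e2]
  simp only [e1, Finset.sum_add_distrib, ← Finset.mul_sum]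
  ring

end helpers

/-- decomposition of the Lagrangian, weak duality, convexity in the
multipliers, and strong duality for the finite-horizon LP. -/
theorem lagrangian_decomposition_and_duality
    {N : ℕ} {S : Fin N → Type} [∀ n, Fintype (S n)] [∀ n, DecidableEq (S n)]
    [∀ n, Nonempty (S n)]
    (hN : 1 ≤ N) (α : ℝ) (hα0 : 0 < α) (hα1 : α ≤ 1)
    (P : ∀ n, Bool → S n → S n → ℝ) (hP : ∀ n a, RowStochastic (P n a))
    (r : ∀ n, S n → Bool → ℝ) (hr : ∀ n s a, 0 ≤ r n s a ∧ r n s a ≤ 1)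
    (μ : ∀ n, S n → ℝ) (τ : ℕ) (hτ : 1 ≤ τ)
    (x : ∀ n, S n → ℝ) (hx : ∀ n, IsProbVec (x n)) :
    (∀ lam : ℕ → ℝ, (∀ t, t < τ → 0 ≤ lam t) →
      Lag P r α μ τ x lam =
        α * (∑ t ∈ Finset.range τ, lam t) +
          (1 / (N : ℝ)) * ∑ n, Varm P r μ n τ (x n) lam) ∧
    (∀ lam : ℕ → ℝ, (∀ t, t < τ → 0 ≤ lam t) →
      Vfin P r α μ τ x ≤ Lag P r α μ τ x lam) ∧
    (∀ lam lam' : ℕ → ℝ, (∀ t, t < τ → 0 ≤ lam t) → (∀ t, t < τ → 0 ≤ lam' t) →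
      ∀ η : ℝ, 0 ≤ η → η ≤ 1 →
        Lag P r α μ τ x (fun t => η * lam t + (1 - η) * lam' t) ≤
          η * Lag P r α μ τ x lam + (1 - η) * Lag P r α μ τ x lam') ∧
    (∃ lam : ℕ → ℝ, (∀ t, t < τ → 0 ≤ lam t) ∧
      Lag P r α μ τ x lam = Vfin P r α μ τ x) := by
  have hNpos : (0 : ℝ) < N := by exact_mod_cast hN
  have hpas : ∀ n, AF (P n) τ (x n) (pas (P n) (x n)) := fun n => pas_AF (hP n) (hx n) τ
  choose B hB using fun (lam : ℕ → ℝ) (n : Fin N) => AO_bdd (P n) (r n) (hr n) (μ n) τ (x n) lam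
  have hVarm : ∀ lam n, Varm P r μ n τ (x n) lam =
      sSup {v | ∃ z, AF (P n) τ (x n) z ∧ v = AO (r n) (μ n) τ lam z} := by
    intro lam n
    unfold Varm AF AO
    simp only [and_assoc]
  have hVle : ∀ lam n z, AF (P n) τ (x n) z →
      AO (r n) (μ n) τ lam z ≤ Varm P r μ n τ (x n) lam := by
    intro lam n z hz
    rw [hVarm]
    refine le_csSup ⟨B lam n, ?_⟩ ⟨z, hz, rfl⟩
    rintro _ ⟨z, hz, rfl⟩
    exact hB lam n z hz
  have hLbd : ∀ lam (y : ℕ → ∀ n, S n → Bool → ℝ), (∀ n, AF (P n) τ (x n) (fun t => y t n)) →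
      LO r α μ τ lam y ≤ α * (∑ t ∈ Finset.range τ, lam t) +
          (1 / (N : ℝ)) * ∑ n, Varm P r μ n τ (x n) lam := by
    intro lam y hy
    rw [LO_eq hN]
    have : ∑ n, AO (r n) (μ n) τ lam (fun t => y t n) ≤ ∑ n, Varm P r μ n τ (x n) lam :=
      Finset.sum_le_sum fun n _ => hVle lam n _ (hy n)
    gcongr
  have hLle : ∀ lam (y : ℕ → ∀ n, S n → Bool → ℝ), (∀ n, AF (P n) τ (x n) (fun t => y t n)) →
      LO r α μ τ lam y ≤ Lag P r α μ τ x lam := by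
    intro lam y hy
    rw [Lag_eq]
    refine le_csSup ⟨α * (∑ t ∈ Finset.range τ, lam t) +
          (1 / (N : ℝ)) * ∑ n, Varm P r μ n τ (x n) lam, ?_⟩ ⟨y, hy, rfl⟩
    rintro _ ⟨y, hy, rfl⟩
    exact hLbd lam y hy
  have hleL : ∀ lam c, (∀ y : ℕ → ∀ n, S n → Bool → ℝ, (∀ n, AF (P n) τ (x n) (fun t => y t n)) →
      LO r α μ τ lam y ≤ c) → Lag P r α μ τ x lam ≤ c := by
    intro lam c h
    rw [Lag_eq]
    refine csSup_le ⟨_, fun t n => pas (P n) (x n) t, hpas, rfl⟩ ?_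
    rintro _ ⟨y, hy, rfl⟩
    exact h y hy
  have hpasB : ∀ t, 0 < SL α (fun n => pas (P n) (x n) t) := by
    intro t
    simp [SL, pas_true, hα0]
  have hweak : ∀ lam : ℕ → ℝ, (∀ t, t < τ → 0 ≤ lam t) →
      ∀ y : ℕ → ∀ n, S n → Bool → ℝ, (∀ n, AF (P n) τ (x n) (fun t => y t n)) →
      (∀ t, t ≤ τ → BudgetFeasible α (y t)) → PO r μ τ y ≤ Lag P r α μ τ x lam := by
    intro lam hl y hy hb
    refine le_trans ?_ (hLle lam y hy)
    unfold LO
    have : 0 ≤ ∑ t ∈ Finset.range τ, lam t * SL α (y t) :=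
      Finset.sum_nonneg fun t ht => by
        have ht := Finset.mem_range.1 ht
        exact mul_nonneg (hl t ht) ((SL_nonneg_iff hN α _).2 (hb t ht.le))
    linarith
  have hweak' : ∀ lam : ℕ → ℝ, (∀ t, t < τ → 0 ≤ lam t) →
      Vfin P r α μ τ x ≤ Lag P r α μ τ x lam := by
    intro lam hl
    rw [Vfin_eq]
    refine csSup_le ⟨_, fun t n => pas (P n) (x n) t, hpas,
      fun t _ => (SL_nonneg_iff hN α _).1 (hpasB t).le, rfl⟩ ?_
    rintro _ ⟨y, hy, hb, rfl⟩
    exact hweak lam hl y hy hb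
  refine ⟨?_, hweak', ?_, ?_⟩
  · intro lam hl
    refine le_antisymm (hleL _ _ fun y hy => hLbd lam y hy) ?_
    refine le_of_forall_pos_le_add fun ε hε => ?_
    have : ∀ n, ∃ z, AF (P n) τ (x n) z ∧
        Varm P r μ n τ (x n) lam - ε < AO (r n) (μ n) τ lam z := by
      intro n
      have hne : {v | ∃ z, AF (P n) τ (x n) z ∧ v = AO (r n) (μ n) τ lam z}.Nonempty :=
        ⟨_, _, hpas n, rfl⟩
      obtain ⟨_, ⟨z, hz, rfl⟩, h⟩ := exists_lt_of_lt_csSup hne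
        (show Varm P r μ n τ (x n) lam - ε < _ by rw [hVarm]; linarith)
      exact ⟨z, hz, h⟩
    choose z hz hlt using this
    have h1 := hLle lam (fun t n => z n t) hz
    rw [LO_eq hN] at h1
    have h2 : ∑ n, (Varm P r μ n τ (x n) lam - ε) ≤ ∑ n, AO (r n) (μ n) τ lam (z n) :=
      Finset.sum_le_sum fun n _ => (hlt n).le
    rw [Finset.sum_sub_distrib] at h2
    simp only [Finset.sum_const, Finset.card_univ, Fintype.card_fin, nsmul_eq_mul] at h2
    have h3 : (1 / (N : ℝ)) * ((∑ n, Varm P r μ n τ (x n) lam) - N * ε) ≤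
        (1 / (N : ℝ)) * ∑ n, AO (r n) (μ n) τ lam (z n) :=
      mul_le_mul_of_nonneg_left h2 (by positivity)
    have h4 : (1 / (N : ℝ)) * ((∑ n, Varm P r μ n τ (x n) lam) - N * ε) =
        (1 / (N : ℝ)) * (∑ n, Varm P r μ n τ (x n) lam) - ε := by
      field_simp
    have h5 : ∑ n, AO (r n) (μ n) τ lam (fun t => z n t) = ∑ n, AO (r n) (μ n) τ lam (z n) := rfl
    rw [h5] at h1
    linarith
  · intro lam lam' hl hl' η h0 h1
    refine hleL _ _ fun y hy => ?_
    have e : LO r α μ τ (fun t => η * lam t + (1 - η) * lam' t) y =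
        η * LO r α μ τ lam y + (1 - η) * LO r α μ τ lam' y := by
      unfold LO
      simp only [add_mul, mul_assoc, Finset.sum_add_distrib, ← Finset.mul_sum]
      ring
    rw [e]
    exact add_le_add (mul_le_mul_of_nonneg_left (hLle _ y hy) h0)
      (mul_le_mul_of_nonneg_left (hLle _ y hy) (by linarith))
  · let C : Set ((Fin τ → ℝ) × ℝ) := {p | ∃ y : ℕ → ∀ n, S n → Bool → ℝ,
      (∀ n, AF (P n) τ (x n) (fun t => y t n)) ∧ p = (fun t : Fin τ => - SL α (y t), PO r μ τ y)}
    obtain ⟨l, hl0, hl⟩ := separation C (by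
        rintro _ ⟨y, hy, rfl⟩ _ ⟨w, hw, rfl⟩ a b ha hb hab
        refine ⟨fun t n s c => a * y t n s c + b * w t n s c,
          fun n => AF_convex (hy n) (hw n) ha hb hab, ?_⟩
        rw [PO_comb]
        refine Prod.ext ?_ ?_
        · funext t
          simp only [SL_comb α a b hab, Prod.fst_add, Prod.smul_fst, Pi.add_apply, Pi.smul_apply,
            smul_eq_mul]
          ring
        · simp) (Vfin P r α μ τ x)
      ⟨_, ⟨fun t n => pas (P n) (x n) t, hpas, rfl⟩, fun t => by simpa using hpasB t⟩ (by
        rintro _ ⟨y, hy, rfl⟩ hb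
        simp only [Left.neg_nonpos_iff] at hb
        rw [Vfin_eq]
        refine le_csSup ⟨Lag P r α μ τ x 0, ?_⟩ ⟨fun t n s c => if t = τ then
          (if c then 0 else y τ n s false + y τ n s true) else y t n s c,
          fun n => AF_last (hy n) hτ, fun t ht => ?_, ?_⟩
        · rintro _ ⟨y, hy, hb, rfl⟩
          exact hweak 0 (fun t _ => le_rfl) y hy hb
        · rw [← SL_nonneg_iff hN]
          by_cases h : t = τ
          · simp [h, SL, hα0.le]
          · simpa [h] using hb ⟨t, by omega⟩
        · unfold PO
          simp only [if_true, Bool.false_eq_true, if_false, add_zero]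
          refine congrArg (· + _) ?_
          refine Finset.sum_congr rfl fun t ht => ?_
          have : t ≠ τ := (Finset.mem_range.1 ht).ne
          simp [this])
    refine ⟨fun t => if h : t < τ then l ⟨t, h⟩ else 0, fun t ht => by simp [ht, hl0], ?_⟩
    refine le_antisymm (hleL _ _ fun y hy => ?_) (hweak' _ fun t ht => by simp [ht, hl0])
    have h := hl _ ⟨y, hy, rfl⟩
    unfold LO
    rw [Finset.sum_range]
    simpa using h
end
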